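/- arXiv:q-alg/9703001 — 3 statements merged into one kernel-verified Lean document; each statement's English description precedes it below -/
import Mathlib

section
/- Let k be a field, V a finite-dimensional k-vector space, and R a unitary R-matrix on V, with ρ_n : S_n → GL(V^{⊗n}) the associated representations. Define ψ_1 = dim_k V and, for l ≥ 2, ψ_l = Tr(R₁ R₂ ⋯ R_{l−1}) on V^{⊗l}, where R_i = id^{⊗(i−1)} ⊗ R ⊗ id^{⊗(l−i−1)}. Then for every n and every permutation σ ∈ S_n that is a product of disjoint cycles of lengths l₁, …, l_r (fixed points counted as cycles of length 1, so l₁ + ⋯ + l_r = n), one has Tr(ρ_n(σ)) = ψ_{l₁} · ψ_{l₂} ⋯ ψ_{l_r}. -/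
/-!
The trace of `ρ σ` depends only on the conjugacy class of `σ`, i.e. on its cycle lengths, so `σ` may
be replaced by a product of full cycles on consecutive blocks of positions of sizes `l₁, …, l_r`.
On a block of size `l` the full cycle is `(1 2)(2 3)⋯(l-1 l)`, which acts by `R₁ R₂ ⋯ R_{l-1}`. Under
the rebracketing `V^{⊗n} ≃ V^{⊗l₁} ⊗ ⋯ ⊗ V^{⊗l_r}` the operator of the block permutation is the tensor
product of these operators (`RR_split_left`, `RR_split_right`), and the trace of a tensor product is
the product of the traces (`trace_blockEnd`).

Restricting `ρ` to a block would require a representation of the smaller symmetric group, hence the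
Coxeter presentation. This is avoided by working with the submonoid `graphR` of pairs
(permutation, operator) that are given by a common word in the generators. It is compatible with
juxtaposition of blocks (`block_mem_graphR`) and contained in the graph of `ρ` (`eq_of_mem_graphR`).
-/

open TensorProduct

noncomputable section

universe u

variable (k : Type u) [Field k] (V : Type u) [AddCommGroup V] [Module k V]

/-- `W m` is the left-bracketed `(m+1)`-fold tensor power `(⋯(V ⊗ V) ⊗ ⋯) ⊗ V` of `V`,
bundled as an object of `ModuleCat k`. -/
def W : ℕ → ModuleCat.{u} k
  | 0 => ModuleCat.of k V
  | m + 1 => ModuleCat.of k (TensorProduct k (W m) V)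

variable {k V}

/-- `RR R m i` is the automorphism `R_{i+1} = id^{⊗i} ⊗ R ⊗ id^{⊗(m-1-i)}` of the
`(m+1)`-fold tensor power `W m`, acting on the `(i+1)`-st and `(i+2)`-nd tensor factors
(`0 ≤ i ≤ m-1`), transported along associators to the fixed left bracketing. -/
def RR (R : (V ⊗[k] V) ≃ₗ[k] V ⊗[k] V) : (m : ℕ) → (i : ℕ) → i + 1 ≤ m →
    ((W k V m : Type u) ≃ₗ[k] (W k V m : Type u))
  | m + 1, i, _ =>
    if hi : i + 1 ≤ m then
      TensorProduct.congr (RR R m i hi) (LinearEquiv.refl k V)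
    else
      match m with
      | 0 => R
      | m' + 1 =>
        (TensorProduct.assoc k (W k V m') V V).trans
          ((TensorProduct.congr (LinearEquiv.refl k (W k V m')) R).trans
            (TensorProduct.assoc k (W k V m') V V).symm)

/-- The composite `R₁ ∘ R₂ ∘ ⋯ ∘ R_m` on the `(m+1)`-fold tensor power `W m`. -/
def chainR (R : (V ⊗[k] V) ≃ₗ[k] V ⊗[k] V) (m : ℕ) : Module.End k (W k V m) :=
  ((List.finRange m).map fun i => ((RR R m i.val i.isLt).toLinearMap)).prod

/-- `ψ_l`: for `l = 1` the dimension of `V`, and for `l ≥ 2` the trace of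
`R₁ R₂ ⋯ R_{l-1}` on the `l`-fold tensor power of `V`. -/
def psiR (R : (V ⊗[k] V) ≃ₗ[k] V ⊗[k] V) (l : ℕ) : k :=
  if l = 1 then (Module.finrank k V : k)
  else LinearMap.trace k (W k V (l - 1)) (chainR R (l - 1))

/-! ### The generators on the left-bracketed tensor powers -/

/-- The identification `V^{⊗(m+1)} ⊗ V = V^{⊗(m+2)}`. It is the identity map, but the two sides are
not reducibly equal, so elements are moved across it explicitly. -/
def tens (m : ℕ) : ((W k V m : Type u) ⊗[k] V) ≃ₗ[k] (W k V (m+1) : Type u) :=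
  LinearEquiv.refl k (TensorProduct k (W k V m) V)

/-- The identification of `V` with its first tensor power. -/
def unit0 : V ≃ₗ[k] (W k V 0 : Type u) := LinearEquiv.refl k V

theorem RR_of_le (R : (V ⊗[k] V) ≃ₗ[k] V ⊗[k] V) (m i : ℕ) (hi : i + 1 ≤ m) (h : i + 1 ≤ m + 1)
    (x : W k V m) (v : V) :
    RR R (m + 1) i h (tens m (x ⊗ₜ v)) = tens m (RR R m i hi x ⊗ₜ v) := by
  have H : RR R (m + 1) i h = TensorProduct.congr (RR R m i hi) (LinearEquiv.refl k V) :=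
    dif_pos hi
  exact (LinearEquiv.congr_fun H _).trans rfl

/-- The last generator applies `R` to the last two tensor factors. -/
theorem RR_top (R : (V ⊗[k] V) ≃ₗ[k] V ⊗[k] V) (m : ℕ) (h : m + 1 + 1 ≤ m + 1 + 1)
    (x : W k V m) (v w : V) :
    RR R (m + 1 + 1) (m + 1) h (tens (m + 1) (tens m (x ⊗ₜ v) ⊗ₜ w)) =
      tens (m + 1) ((TensorProduct.congr (tens m) (LinearEquiv.refl k V))
        ((TensorProduct.assoc k _ V V).symm (x ⊗ₜ R (v ⊗ₜ w)))) := by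
  have H : RR R (m + 1 + 1) (m + 1) h = (TensorProduct.assoc k (W k V m) V V).trans
      ((TensorProduct.congr (LinearEquiv.refl k (W k V m)) R).trans
        (TensorProduct.assoc k (W k V m) V V).symm) :=
    dif_neg (by omega)
  refine (LinearEquiv.congr_fun H _).trans ?_
  exact congrArg (tens (m + 1)) (LinearEquiv.congr_fun
    (TensorProduct.congr_refl_refl (R := k) (M := (W k V m : Type u) ⊗[k] V) (N := V))
    ((TensorProduct.assoc k (W k V m) V V).symm (x ⊗ₜ R (v ⊗ₜ w)))).symm

theorem RR_one (R : (V ⊗[k] V) ≃ₗ[k] V ⊗[k] V) (h : 0 + 1 ≤ 0 + 1) (v w : V) :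
    RR R (0 + 1) 0 h (tens 0 (unit0 v ⊗ₜ w)) =
      tens 0 ((TensorProduct.congr unit0 (LinearEquiv.refl k V)) (R (v ⊗ₜ w))) := by
  have H : RR R (0 + 1) 0 h = R := dif_neg (Nat.not_succ_le_zero 0)
  refine (LinearEquiv.congr_fun H _).trans ?_
  exact congrArg (tens 0) (LinearEquiv.congr_fun
    (TensorProduct.congr_refl_refl (R := k) (M := V) (N := V)) (R (v ⊗ₜ w))).symm

/-! ### Splitting a tensor power into two blocks -/

/-- The rebracketing `V^{⊗(m+1+l+1)} ≃ V^{⊗(m+1)} ⊗ V^{⊗(l+1)}` (recall that `W k V m` has `m + 1`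
factors). -/
def split (m : ℕ) : (l : ℕ) → (W k V (m + 1 + l) : Type u) ≃ₗ[k]
    (W k V m : Type u) ⊗[k] (W k V l : Type u)
  | 0 => (tens m).symm.trans (TensorProduct.congr (LinearEquiv.refl k _) unit0)
  | l + 1 => (tens (m + 1 + l)).symm.trans <|
      (TensorProduct.congr (split m l) (LinearEquiv.refl k V)).trans <|
      (TensorProduct.assoc k _ _ V).trans <|
      TensorProduct.congr (LinearEquiv.refl k _) (tens l)

theorem split_symm_zero (m : ℕ) (x : W k V m) (v : V) :
    (split m 0).symm (x ⊗ₜ unit0 v) = tens m (x ⊗ₜ v) := by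
  simp [split]

theorem split_symm_succ (m l : ℕ) (x : W k V m) (y : W k V l) (v : V) :
    (split m (l + 1)).symm (x ⊗ₜ tens l (y ⊗ₜ v)) =
      tens (m + 1 + l) ((split m l).symm (x ⊗ₜ y) ⊗ₜ v) := by
  simp [split]

/-- Every element of `V^{⊗(m+2)}` is a sum of elements `x ⊗ v`. -/
theorem tens_induction {m : ℕ} {P : (W k V (m + 1) : Type u) → Prop}
    (h : ∀ x v, P (tens m (x ⊗ₜ v))) (hadd : ∀ a b, P a → P b → P (a + b)) (x) : P x := by
  obtain ⟨z, rfl⟩ := (tens m).surjective x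
  induction z using TensorProduct.induction_on with
  | zero => simpa using h 0 0
  | tmul a b => exact h a b
  | add a b ha hb => rw [map_add]; exact hadd _ _ ha hb

/-- A generator supported in the first `m + 1` factors acts on the left block only. -/
theorem RR_split_left (R : (V ⊗[k] V) ≃ₗ[k] V ⊗[k] V) (m i : ℕ) (hi : i + 1 ≤ m)
    (x : W k V m) : ∀ (l : ℕ) (h : i + 1 ≤ m + 1 + l) (y : W k V l),
    RR R (m + 1 + l) i h ((split m l).symm (x ⊗ₜ y)) = (split m l).symm (RR R m i hi x ⊗ₜ y)
  | 0, h, y => by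
    obtain ⟨v, rfl⟩ := unit0.surjective y
    rw [split_symm_zero, split_symm_zero]
    exact RR_of_le R m i hi h x v
  | l + 1, h, y => by
    induction y using tens_induction with
    | h y v =>
      rw [split_symm_succ, split_symm_succ, ← RR_split_left R m i hi x l (by omega)]
      exact RR_of_le R (m + 1 + l) i _ h _ v
    | hadd a b ha hb => simp only [TensorProduct.tmul_add, map_add, ha, hb]

/-- A generator supported in the last `l + 1` factors acts on the right block only, as the generator
with index shifted by `m + 1`. The only case where the recursion defining `RR` does not apply
directly is the last generator, which straddles the last two factors. -/
theorem RR_split_right (R : (V ⊗[k] V) ≃ₗ[k] V ⊗[k] V) (m j : ℕ)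
    (x : W k V m) : ∀ (l : ℕ) (hj : j + 1 ≤ l) (h : m + 1 + j + 1 ≤ m + 1 + l) (y : W k V l),
    RR R (m + 1 + l) (m + 1 + j) h ((split m l).symm (x ⊗ₜ y)) =
      (split m l).symm (x ⊗ₜ RR R l j hj y)
  | l + 1, hj, h, y => by
    induction y using tens_induction with
    | hadd a b ha hb => simp only [TensorProduct.tmul_add, map_add, ha, hb]
    | h y v =>
      rcases Nat.lt_or_ge j l with hl | hl
      · rw [split_symm_succ, RR_of_le R l j hl, split_symm_succ,
          ← RR_split_right R m j x l hl (by omega)]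
        exact RR_of_le R (m + 1 + l) (m + 1 + j) _ h _ v
      obtain rfl : j = l := by omega
      rw [split_symm_succ]
      cases j with
      | zero =>
        obtain ⟨w, rfl⟩ := unit0.surjective y
        rw [split_symm_zero, RR_one]
        refine (RR_top R m h x w v).trans ?_
        induction R (w ⊗ₜ v) using TensorProduct.induction_on with
        | zero => simp only [TensorProduct.tmul_zero, map_zero]
        | add a b ha hb => simp only [TensorProduct.tmul_add, map_add, ha, hb]
        | tmul a b =>
          rw [TensorProduct.assoc_symm_tmul, TensorProduct.congr_tmul, TensorProduct.congr_tmul,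
            LinearEquiv.refl_apply, split_symm_succ, split_symm_zero]
      | succ j =>
        induction y using tens_induction with
        | hadd a b ha hb =>
          simp only [TensorProduct.tmul_add, TensorProduct.add_tmul, map_add, ha, hb]
        | h y w =>
          rw [split_symm_succ, RR_top R j]
          refine (RR_top R (m + 1 + j) h _ w v).trans ?_
          induction R (w ⊗ₜ v) using TensorProduct.induction_on with
          | zero => simp only [TensorProduct.tmul_zero, map_zero]
          | add a b ha hb => simp only [TensorProduct.tmul_add, map_add, ha, hb]
          | tmul a b =>
            rw [TensorProduct.assoc_symm_tmul, TensorProduct.congr_tmul,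
              TensorProduct.assoc_symm_tmul, TensorProduct.congr_tmul,
              LinearEquiv.refl_apply, split_symm_succ, split_symm_succ]
            rfl
/-! ### Block permutations and block operators -/

/-- The splitting of `m + 1 + l + 1` positions into the first `m + 1` and the last `l + 1`. -/
def finSplit (m l : ℕ) : Fin (m + 1) ⊕ Fin (l + 1) ≃ Fin (m + 1 + l + 1) :=
  finSumFinEquiv

/-- The image of `(σ, τ)` under the Young embedding `S_{m+1} × S_{l+1} → S_{m+1+l+1}`. -/
def blockPerm {m l : ℕ} (σ : Equiv.Perm (Fin (m + 1))) (τ : Equiv.Perm (Fin (l + 1))) :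
    Equiv.Perm (Fin (m + 1 + l + 1)) :=
  (finSplit m l).permCongr (Equiv.sumCongr σ τ)

/-- The operator `f ⊗ g` on `V^{⊗(m+1+l+1)}`. -/
def blockEnd {m l : ℕ} (f : Module.End k (W k V m)) (g : Module.End k (W k V l)) :
    Module.End k (W k V (m + 1 + l)) :=
  (split m l).symm.conj (TensorProduct.map f g)

theorem blockPerm_mul {m l : ℕ} (σ σ' : Equiv.Perm (Fin (m + 1)))
    (τ τ' : Equiv.Perm (Fin (l + 1))) :
    blockPerm (σ * σ') (τ * τ') = blockPerm σ τ * blockPerm σ' τ' := by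
  ext x
  obtain ⟨y, rfl⟩ := (finSplit m l).surjective x
  rcases y with y | y <;> simp [blockPerm, Equiv.permCongr_apply]

theorem blockPerm_one {m l : ℕ} :
    blockPerm (1 : Equiv.Perm (Fin (m + 1))) (1 : Equiv.Perm (Fin (l + 1))) = 1 := by
  ext x
  obtain ⟨y, rfl⟩ := (finSplit m l).surjective x
  rcases y with y | y <;> simp [blockPerm, Equiv.permCongr_apply]

theorem blockEnd_mul {m l : ℕ} (f f' : Module.End k (W k V m)) (g g' : Module.End k (W k V l)) :
    blockEnd (f * f') (g * g') = blockEnd f g * blockEnd f' g' := by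
  simp only [blockEnd, Module.End.mul_eq_comp, TensorProduct.map_comp, LinearEquiv.conj_comp]

theorem blockEnd_one {m l : ℕ} :
    blockEnd (1 : Module.End k (W k V m)) (1 : Module.End k (W k V l)) = 1 := by
  simp only [blockEnd, TensorProduct.map_one]
  ext x
  simp [LinearEquiv.conj_apply]

theorem cycleType_blockPerm {m l : ℕ} (σ : Equiv.Perm (Fin (m + 1)))
    (τ : Equiv.Perm (Fin (l + 1))) :
    (blockPerm σ τ).cycleType = σ.cycleType + τ.cycleType := by
  have h1 : blockPerm σ (1 : Equiv.Perm (Fin (l + 1))) = σ.extendDomain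
      (Equiv.ofInjective (fun x => finSplit m l (Sum.inl x))
        ((finSplit m l).injective.comp Sum.inl_injective)) := by
    ext x
    obtain ⟨y, rfl⟩ := (finSplit m l).surjective x
    rcases y with y | y
    · refine Eq.trans ?_ (congrArg Fin.val (Equiv.Perm.extendDomain_apply_image σ
        (Equiv.ofInjective (fun x => finSplit m l (Sum.inl x))
        ((finSplit m l).injective.comp Sum.inl_injective)) y)).symm
      simp [blockPerm, Equiv.permCongr_apply]
    · rw [Equiv.Perm.extendDomain_apply_not_subtype]
      · simp [blockPerm, Equiv.permCongr_apply]
      · rintro ⟨z, hz⟩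
        simpa using (finSplit m l).injective hz
  have h2 : blockPerm (1 : Equiv.Perm (Fin (m + 1))) τ = τ.extendDomain
      (Equiv.ofInjective (fun x => finSplit m l (Sum.inr x))
        ((finSplit m l).injective.comp Sum.inr_injective)) := by
    ext x
    obtain ⟨y, rfl⟩ := (finSplit m l).surjective x
    rcases y with y | y
    · rw [Equiv.Perm.extendDomain_apply_not_subtype]
      · simp [blockPerm, Equiv.permCongr_apply]
      · rintro ⟨z, hz⟩
        simpa using (finSplit m l).injective hz
    · refine Eq.trans ?_ (congrArg Fin.val (Equiv.Perm.extendDomain_apply_image τ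
        (Equiv.ofInjective (fun x => finSplit m l (Sum.inr x))
        ((finSplit m l).injective.comp Sum.inr_injective)) y)).symm
      simp [blockPerm, Equiv.permCongr_apply]
  have h3 : blockPerm σ τ = blockPerm σ 1 * blockPerm 1 τ := by
    rw [← blockPerm_mul, mul_one, one_mul]
  have hd : (blockPerm σ (1 : Equiv.Perm (Fin (l + 1)))).Disjoint
      (blockPerm (1 : Equiv.Perm (Fin (m + 1))) τ) := by
    intro x
    obtain ⟨y, rfl⟩ := (finSplit m l).surjective x
    rcases y with y | y <;> simp [blockPerm, Equiv.permCongr_apply]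
  classical
  rw [h3, hd.cycleType_mul, h1, h2, Equiv.Perm.cycleType_extendDomain,
    Equiv.Perm.cycleType_extendDomain]

instance finiteDimensional_W [FiniteDimensional k V] : ∀ m : ℕ, FiniteDimensional k (W k V m)
  | 0 => Module.Finite.equiv unit0
  | m + 1 =>
    have := finiteDimensional_W m
    Module.Finite.equiv (tens m)

theorem trace_blockEnd [FiniteDimensional k V] {m l : ℕ} (f : Module.End k (W k V m))
    (g : Module.End k (W k V l)) :
    LinearMap.trace k _ (blockEnd f g) = LinearMap.trace k _ f * LinearMap.trace k _ g := by
  rw [blockEnd, LinearMap.trace_conj', LinearMap.trace_tensorProduct']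

/-! ### Pairs of a permutation and an operator given by the same word -/

/-- The adjacent transposition of positions `i` and `i + 1` (counted from `0`). -/
def adj {m : ℕ} (i : Fin m) : Equiv.Perm (Fin (m + 1)) := Equiv.swap i.castSucc i.succ

/-- The submonoid of `S_{m+1} × End(V^{⊗(m+1)})` generated by the pairs
`((i, i+1), R_i)`: a pair lies in it when both components are given by a common word in the
generators. For any representation `ρ` sending `(i, i+1)` to `R_i` it is the graph of `ρ`, but it is
defined without knowing that `ρ` exists. -/
def graphR (R : (V ⊗[k] V) ≃ₗ[k] V ⊗[k] V) (m : ℕ) :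
    Submonoid (Equiv.Perm (Fin (m + 1)) × Module.End k (W k V m)) :=
  Submonoid.closure (Set.range fun i : Fin m =>
    (adj i, ((RR R m i.val i.isLt).toLinearMap : Module.End k (W k V m))))

theorem blockPerm_adj_left {m l : ℕ} (i : Fin m) :
    blockPerm (adj i) (1 : Equiv.Perm (Fin (l + 1))) =
      adj (m := m + 1 + l) ⟨i, by omega⟩ := by
  have : ((Equiv.sumCongr (adj i) (1 : Equiv.Perm (Fin (l + 1)))) : Equiv.Perm _) =
      Equiv.swap (Sum.inl i.castSucc) (Sum.inl i.succ) :=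
    Equiv.Perm.sumCongr_swap_one _ _
  rw [blockPerm, this, Equiv.permCongr_def, Equiv.symm_trans_swap_trans]
  rfl

theorem blockPerm_adj_right {m l : ℕ} (j : Fin l) :
    blockPerm (1 : Equiv.Perm (Fin (m + 1))) (adj j) =
      adj (m := m + 1 + l) ⟨m + 1 + j, by omega⟩ := by
  have : ((Equiv.sumCongr (1 : Equiv.Perm (Fin (m + 1))) (adj j)) : Equiv.Perm _) =
      Equiv.swap (Sum.inr j.castSucc) (Sum.inr j.succ) :=
    Equiv.Perm.sumCongr_one_swap _ _
  rw [blockPerm, this, Equiv.permCongr_def, Equiv.symm_trans_swap_trans]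
  rfl

theorem blockEnd_RR_left (R : (V ⊗[k] V) ≃ₗ[k] V ⊗[k] V) {m : ℕ} (l : ℕ) (i : Fin m) :
    blockEnd (l := l) ((RR R m i.val i.isLt).toLinearMap : Module.End k (W k V m)) 1 =
      (RR R (m + 1 + l) i.val (by omega)).toLinearMap := by
  ext z
  obtain ⟨t, rfl⟩ := (split m l).symm.surjective z
  induction t using TensorProduct.induction_on with
  | zero => simp only [map_zero]
  | add a b ha hb => simp only [map_add, ha, hb]
  | tmul x y =>
    simp [blockEnd, LinearEquiv.conj_apply, RR_split_left R m i i.isLt]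

theorem blockEnd_RR_right (R : (V ⊗[k] V) ≃ₗ[k] V ⊗[k] V) (m : ℕ) {l : ℕ} (j : Fin l) :
    blockEnd (m := m) 1 ((RR R l j.val j.isLt).toLinearMap : Module.End k (W k V l)) =
      (RR R (m + 1 + l) (m + 1 + j.val) (by omega)).toLinearMap := by
  ext z
  obtain ⟨t, rfl⟩ := (split m l).symm.surjective z
  induction t using TensorProduct.induction_on with
  | zero => simp only [map_zero]
  | add a b ha hb => simp only [map_add, ha, hb]
  | tmul x y =>
    simp [blockEnd, LinearEquiv.conj_apply, RR_split_right R m j x l j.isLt]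

/-- Juxtaposing words on two blocks of positions gives a word for the block permutation. -/
theorem block_mem_graphR (R : (V ⊗[k] V) ≃ₗ[k] V ⊗[k] V) {m l : ℕ}
    {p : Equiv.Perm (Fin (m + 1)) × Module.End k (W k V m)} (hp : p ∈ graphR R m)
    {q : Equiv.Perm (Fin (l + 1)) × Module.End k (W k V l)} (hq : q ∈ graphR R l) :
    (blockPerm p.1 q.1, blockEnd p.2 q.2) ∈ graphR R (m + 1 + l) := by
  have left : (blockPerm p.1 (1 : Equiv.Perm (Fin (l + 1))), blockEnd p.2 1) ∈
      graphR R (m + 1 + l) := by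
    induction hp using Submonoid.closure_induction with
    | mem x hx =>
      obtain ⟨i, rfl⟩ := hx
      refine Submonoid.subset_closure ⟨⟨i, by omega⟩, ?_⟩
      simp only [blockPerm_adj_left, blockEnd_RR_left]
    | one =>
      simp only [Prod.fst_one, Prod.snd_one, blockPerm_one, blockEnd_one]
      exact one_mem _
    | mul x y _ _ hx hy =>
      have := mul_mem hx hy
      rwa [Prod.mk_mul_mk, ← blockPerm_mul, ← blockEnd_mul, one_mul, one_mul] at this
  have right : (blockPerm (1 : Equiv.Perm (Fin (m + 1))) q.1, blockEnd 1 q.2) ∈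
      graphR R (m + 1 + l) := by
    clear left hp
    induction hq using Submonoid.closure_induction with
    | mem x hx =>
      obtain ⟨j, rfl⟩ := hx
      refine Submonoid.subset_closure ⟨⟨m + 1 + j, by omega⟩, ?_⟩
      simp only [blockPerm_adj_right, blockEnd_RR_right]
    | one =>
      simp only [Prod.fst_one, Prod.snd_one, blockPerm_one, blockEnd_one]
      exact one_mem _
    | mul x y _ _ hx hy =>
      have := mul_mem hx hy
      rwa [Prod.mk_mul_mk, ← blockPerm_mul, ← blockEnd_mul, one_mul, one_mul] at this
  have := mul_mem left right
  rwa [Prod.mk_mul_mk, ← blockPerm_mul, ← blockEnd_mul, mul_one, mul_one, one_mul, one_mul] at this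

/-! ### The full cycle and permutations of arbitrary cycle type -/

/-- The product `(0 1)(1 2)⋯(m-1 m)`, a cycle through all `m + 1` positions. -/
def longCycle (m : ℕ) : Equiv.Perm (Fin (m + 1)) := ((List.finRange m).map adj).prod

theorem longCycle_eq (m : ℕ) : longCycle m = (List.finRange (m + 1)).formPerm := by
  rw [longCycle, List.formPerm]
  congr 1
  apply List.ext_getElem
  · simp
  · intro i h1 h2
    simp [adj]

/-- The filter covers the case `m = 0`, where `longCycle` is the identity and Mathlib's `cycleType`
omits the fixed point. -/
theorem cycleType_longCycle (m : ℕ) :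
    (longCycle m).cycleType = ({m + 1} : Multiset ℕ).filter (· ≠ 1) := by
  rcases m with _ | m
  · simp [longCycle, Multiset.filter_singleton]
  · have hn := List.nodup_finRange (m + 1 + 1)
    rw [longCycle_eq, (List.isCycle_formPerm hn (by simp)).cycleType,
      List.support_formPerm_of_nodup _ hn (by
        intro x hx; simpa using congrArg List.length hx)]
    simp [Multiset.filter_singleton]

theorem prod_map_mk {ι M N : Type*} [Monoid M] [Monoid N] (a : ι → M) (b : ι → N) (L : List ι) :
    (L.map fun i => (a i, b i)).prod = ((L.map a).prod, (L.map b).prod) := by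
  induction L with
  | nil => rfl
  | cons i L ih => simp only [List.map_cons, List.prod_cons, ih, Prod.mk_mul_mk]

theorem longCycle_mem_graphR (R : (V ⊗[k] V) ≃ₗ[k] V ⊗[k] V) (m : ℕ) :
    (longCycle m, chainR R m) ∈ graphR R m := by
  have : (longCycle m, chainR R m) = ((List.finRange m).map fun i : Fin m =>
      (adj i, ((RR R m i.val i.isLt).toLinearMap : Module.End k (W k V m)))).prod := by
    exact (prod_map_mk _ _ _).symm
  rw [this]
  refine list_prod_mem fun x hx => ?_
  obtain ⟨i, -, rfl⟩ := List.mem_map.1 hx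
  exact Submonoid.subset_closure ⟨i, rfl⟩

theorem trace_chainR [FiniteDimensional k V] (R : (V ⊗[k] V) ≃ₗ[k] V ⊗[k] V) (m : ℕ) :
    LinearMap.trace k _ (chainR R m) = psiR R (m + 1) := by
  rcases m with _ | m
  · rw [psiR, if_pos rfl]
    have : chainR R 0 = (1 : Module.End k (W k V 0)) := rfl
    rw [this, LinearMap.trace_one]
    rfl
  · rw [psiR, if_neg (by omega)]
    rfl

/-- For every nonempty multiset `L` of positive integers there is a permutation with cycle lengths `L`
(fixed points included), given by a word whose operator has trace `∏ ψ_l`, `l ∈ L`: place a full cycle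
on each of consecutive blocks. -/
theorem exists_mem_graphR [FiniteDimensional k V] (R : (V ⊗[k] V) ≃ₗ[k] V ⊗[k] V)
    (L : Multiset ℕ) : L ≠ 0 → (∀ a ∈ L, 0 < a) →
    ∃ m, L.sum = m + 1 ∧ ∃ p ∈ graphR R m, p.1.cycleType = L.filter (· ≠ 1) ∧
      LinearMap.trace k _ p.2 = (L.map (psiR R)).prod := by
  induction L using Multiset.induction with
  | empty => intro h; exact absurd rfl h
  | cons a L ih =>
    intro _ hpos
    obtain ⟨l, rfl⟩ : ∃ l, a = l + 1 :=
      Nat.exists_eq_succ_of_ne_zero (hpos a (Multiset.mem_cons_self a L)).ne'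
    by_cases hL : L = 0
    · subst hL
      exact ⟨l, by simp, _, longCycle_mem_graphR R l, cycleType_longCycle l,
        by simp [trace_chainR]⟩
    · obtain ⟨m, hm, p, hp, hc, ht⟩ := ih hL fun b hb => hpos b (Multiset.mem_cons_of_mem hb)
      refine ⟨m + 1 + l, ?_, _, block_mem_graphR R hp (longCycle_mem_graphR R l), ?_, ?_⟩
      · rw [Multiset.sum_cons, hm]; omega
      · rw [cycleType_blockPerm, hc, cycleType_longCycle, ← Multiset.filter_add, add_comm,
          Multiset.singleton_add]
      · rw [trace_blockEnd, ht, trace_chainR, Multiset.map_cons, Multiset.prod_cons, mul_comm]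

/-! ### Comparison with the representation -/

theorem eq_of_mem_graphR (R : (V ⊗[k] V) ≃ₗ[k] V ⊗[k] V) {m : ℕ}
    (ρ : Equiv.Perm (Fin (m + 1)) →* ((W k V m : Type u) ≃ₗ[k] (W k V m : Type u)))
    (hρ : ∀ i : Fin m, ρ (adj i) = RR R m i i.isLt)
    {p : Equiv.Perm (Fin (m + 1)) × Module.End k (W k V m)} (hp : p ∈ graphR R m) :
    (ρ p.1).toLinearMap = p.2 := by
  induction hp using Submonoid.closure_induction with
  | mem x hx => obtain ⟨i, rfl⟩ := hx; exact congrArg _ (hρ i)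
  | one => rw [Prod.fst_one, map_one]; rfl
  | mul x y _ _ hx hy => rw [Prod.fst_mul, map_mul, Prod.snd_mul, ← hx, ← hy]; rfl

theorem trace_eq_of_isConj {G M : Type*} [Group G] [AddCommGroup M] [Module k M]
    (ρ : G →* (M ≃ₗ[k] M)) {g h : G} (hgh : IsConj g h) :
    LinearMap.trace k M (ρ g).toLinearMap = LinearMap.trace k M (ρ h).toLinearMap := by
  obtain ⟨c, rfl⟩ := isConj_iff.1 hgh
  rw [← LinearMap.trace_conj' _ (ρ c), map_mul, map_mul, map_inv]
  rfl

/-- for a unitary R-matrix `R` on a finite-dimensional space `V` and the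
associated representation `ρ_n` of `S_n` on `V^{⊗n}`, the trace of `ρ_n(σ)` is the product
of `ψ_l` over the cycle lengths `l` of `σ` (fixed points counted as cycles of length 1). -/
theorem trace_of_R_matrix_representation_eq_prod_over_cycles
    [FiniteDimensional k V]
    (R : (V ⊗[k] V) ≃ₗ[k] V ⊗[k] V)
    (hR : ∀ v, R (R v) = v)
    (hYB :
      (TensorProduct.congr R (LinearEquiv.refl k V)).trans
        (((TensorProduct.assoc k V V V).trans
            ((TensorProduct.congr (LinearEquiv.refl k V) R).trans
              (TensorProduct.assoc k V V V).symm)).trans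
          (TensorProduct.congr R (LinearEquiv.refl k V)))
      = ((TensorProduct.assoc k V V V).trans
            ((TensorProduct.congr (LinearEquiv.refl k V) R).trans
              (TensorProduct.assoc k V V V).symm)).trans
          ((TensorProduct.congr R (LinearEquiv.refl k V)).trans
            ((TensorProduct.assoc k V V V).trans
              ((TensorProduct.congr (LinearEquiv.refl k V) R).trans
                (TensorProduct.assoc k V V V).symm))))
    (n : ℕ) (hn : 1 ≤ n)
    (ρ : Equiv.Perm (Fin n) →* ((W k V (n - 1) : Type u) ≃ₗ[k] (W k V (n - 1) : Type u)))
    (hρ : ∀ (i : ℕ) (h1 : 1 ≤ i) (h2 : i ≤ n - 1),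
      ρ (Equiv.swap ⟨i - 1, by omega⟩ ⟨i, by omega⟩) = RR R (n - 1) (i - 1) (by omega))
    (σ : Equiv.Perm (Fin n)) :
    LinearMap.trace k (W k V (n - 1)) (ρ σ).toLinearMap
      = (σ.cycleType.map (psiR R)).prod * (psiR R 1) ^ (n - σ.support.card) := by
  obtain ⟨m, rfl⟩ : ∃ m, n = m + 1 := Nat.exists_eq_succ_of_ne_zero (by omega)
  have hcard : σ.support.card ≤ m + 1 := by simpa using Finset.card_le_univ σ.support
  -- All cycle lengths of `σ`, with one `1` for each fixed point.
  obtain ⟨m', hm', p, hp, hc, ht⟩ := exists_mem_graphR R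
    (σ.cycleType + Multiset.replicate (m + 1 - σ.support.card) 1)
    (by
      intro h
      have := congrArg Multiset.sum h
      rw [Multiset.sum_add, Equiv.Perm.sum_cycleType, Multiset.sum_replicate, smul_eq_mul,
        Multiset.sum_zero] at this
      omega)
    (by
      intro a ha
      rcases Multiset.mem_add.1 ha with ha | ha
      · exact zero_lt_one.trans (Equiv.Perm.one_lt_of_mem_cycleType ha)
      · rw [Multiset.eq_of_mem_replicate ha]; exact one_pos)
  obtain rfl : m = m' := by
    rw [Multiset.sum_add, Equiv.Perm.sum_cycleType, Multiset.sum_replicate, smul_eq_mul] at hm'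
    omega
  have hconj : IsConj σ p.1 := by
    rw [Equiv.Perm.isConj_iff_cycleType_eq, hc, Multiset.filter_add,
      Multiset.filter_eq_self.2 fun a ha => (Equiv.Perm.one_lt_of_mem_cycleType ha).ne',
      Multiset.filter_eq_nil.2 fun a ha => by simp [Multiset.eq_of_mem_replicate ha]]
    exact (add_zero _).symm
  refine (trace_eq_of_isConj ρ hconj).trans ?_
  refine (congrArg _ (eq_of_mem_graphR R ρ (fun i => hρ (i + 1) (by omega) i.isLt) hp)).trans ?_
  rw [← Multiset.prod_replicate, ← Multiset.map_replicate, ← Multiset.prod_add, ← Multiset.map_add]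
  exact ht

end
end

section
/- Let k be a field of characteristic zero, V a finite-dimensional k-vector space, and R a unitary R-matrix on V, with ρ_n : S_n → GL(V^{⊗n}) the associated representations. Let A_n = Tr( (1/n!) Σ_{σ ∈ S_n} sign(σ) ρ_n(σ) ) and S_n' = Tr( (1/n!) Σ_{σ ∈ S_n} ρ_n(σ) ), with A₀ = S₀' = 1. Then ( Σ_{n ≥ 0} S_n' t^n ) · ( Σ_{n ≥ 0} A_n (−t)^n ) = 1 in k[[t]]. -/
/-!
Write `χ_n` for the character of `ρ_n`. Concatenation of tensors intertwines `ρ_p ⊗ ρ_q` with the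
restriction of `ρ_{p+q}` to `S_p × S_q` (it is enough to check the generators `R_i`), so `χ_{p+q}`
restricts to `χ_p χ_q` on every Young subgroup (`charW_sumCongr`).

For `N ≥ 1`, the coefficient of `t^N` in the product is therefore `1 / N!` times
`∑_A (-1)^{|A|} ∑_{σ A = A} sign(σ|_A) χ_N(σ)`, with `A` running over the subsets of `{1, …, N}`.
When `A` is `σ`-stable, `sign(σ|_A)` is the principal minor on `A` of the permutation matrix `P_σ`;
the other principal minors vanish (`sum_mul_minor_eq`). Signed sums of principal minors are the
coefficients of the characteristic polynomial, so for fixed `σ` the sum over `A` is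
`det(1 - P_σ)`, which is zero because `P_σ` fixes the all-ones vector
(`eval_one_charpoly_permMatrix`, `alternating_sum_eq_zero`).
-/

open TensorProduct

noncomputable section

universe u

variable (k : Type u) [Field k] (V : Type u) [AddCommGroup V] [Module k V]

variable {k V}

/-- `A_n = Tr((1/n!) Σ_σ sign(σ) ρ_n(σ))` for `n ≥ 1`, and `A₀ = 1`. -/
def antisymCoeff
    (ρ : ∀ n : ℕ, Equiv.Perm (Fin (n + 1)) →* ((W k V n : Type u) ≃ₗ[k] (W k V n : Type u))) :
    ℕ → k
  | 0 => 1
  | m + 1 => LinearMap.trace k (W k V m)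
      ((((m + 1).factorial : k)⁻¹) •
        ∑ σ : Equiv.Perm (Fin (m + 1)), ((Equiv.Perm.sign σ : ℤ) : k) • (ρ m σ).toLinearMap)

/-- `S'_n = Tr((1/n!) Σ_σ ρ_n(σ))` for `n ≥ 1`, and `S'₀ = 1`. -/
def symCoeff
    (ρ : ∀ n : ℕ, Equiv.Perm (Fin (n + 1)) →* ((W k V n : Type u) ≃ₗ[k] (W k V n : Type u))) :
    ℕ → k
  | 0 => 1
  | m + 1 => LinearMap.trace k (W k V m)
      ((((m + 1).factorial : k)⁻¹) •
        ∑ σ : Equiv.Perm (Fin (m + 1)), (ρ m σ).toLinearMap)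

/-! ### Principal minors of permutation matrices -/

section Combinatorics
open Equiv Matrix

/-- The principal minor on `s` of the matrix of `σ` is the sign of `σ` restricted to `s` if `σ`
preserves `s`, and vanishes otherwise (some row is then zero). Hence a sum weighted by these minors
runs over the Young subgroup of `s`, here `S_p × S_q` embedded through `e`. -/
lemma sum_mul_minor_eq {α : Type*} [Fintype α] [DecidableEq α] {K : Type*} [CommRing K]
    (F : Perm α → K) {p q : ℕ} (s : Finset α) (e : Fin p ⊕ Fin q ≃ α) (g : Fin q ≃ s)
    (hg : ∀ b, e (Sum.inr b) = g b) :
    ∑ σ : Perm α, F σ * ((σ.permMatrix K).submatrix (Subtype.val : s → α) Subtype.val).det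
      = ∑ x : Perm (Fin p) × Perm (Fin q),
        F (e.permCongr (Perm.sumCongr x.1 x.2)) * ((Perm.sign x.2 : ℤ) : K) := by
  classical
  rw [← Equiv.sum_comp e.permCongr]
  symm
  have key : ∀ τ : Perm (Fin p ⊕ Fin q),
      (((e.permCongr τ).permMatrix K).submatrix (Subtype.val : s → α) Subtype.val).det
        = ((τ.permMatrix K).submatrix Sum.inr Sum.inr).det := by
    intro τ
    rw [← Matrix.det_submatrix_equiv_self g]
    congr 1
    ext i j
    simp [PEquiv.toMatrix_apply, ← hg]
  refine Finset.sum_of_injOn (fun x => Perm.sumCongr x.1 x.2) ?_ (by simp) ?_ ?_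
  · exact fun x _ y _ h => Perm.sumCongrHom_injective h
  · intro τ _ hτ
    rw [key]
    have h1 : ¬ Set.MapsTo τ (Set.range Sum.inr) (Set.range Sum.inr) := by
      rw [← Perm.perm_mapsTo_inl_iff_mapsTo_inr]
      intro h
      obtain ⟨x, hx⟩ := Perm.mem_sumCongrHom_range_of_perm_mapsTo_inl h
      exact hτ ⟨x, by simp, hx⟩
    obtain ⟨b, hb⟩ : ∃ b : Fin q, τ (Sum.inr b) ∉ Set.range (Sum.inr : Fin q → Fin p ⊕ Fin q) := by
      simpa [Set.MapsTo] using h1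
    rw [Matrix.det_eq_zero_of_row_eq_zero b, mul_zero]
    intro j
    have : τ (Sum.inr b) ≠ Sum.inr j := fun h => hb ⟨j, h.symm⟩
    simp [PEquiv.toMatrix_apply, this]
  · intro x _
    rw [key, ← Matrix.det_permutation]
    congr 2
    ext i j
    simp [PEquiv.toMatrix_apply]

/-- The all-ones vector is fixed by every permutation matrix. -/
lemma eval_one_charpoly_permMatrix {α : Type*} [Fintype α] [DecidableEq α] [Nonempty α]
    {K : Type*} [Field K] (σ : Perm α) : (σ.permMatrix K).charpoly.eval 1 = 0 := by
  rw [Matrix.eval_charpoly, ← Matrix.exists_mulVec_eq_zero_iff]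
  refine ⟨1, one_ne_zero, ?_⟩
  rw [Matrix.sub_mulVec, Matrix.permMatrix_mulVec]
  ext i
  simp

lemma exists_split {α : Type*} [Fintype α] [DecidableEq α] {p q : ℕ} (s : Finset α)
    (hα : Fintype.card α = p + q) (hs : s.card = q) :
    ∃ (e : Fin p ⊕ Fin q ≃ α) (g : Fin q ≃ s), ∀ b, e (Sum.inr b) = g b := by
  have g : Fin q ≃ s := (finCongr hs.symm).trans s.equivFin.symm
  have h : Fintype.card {x // ¬ x ∈ s} = p := by
    rw [Fintype.card_subtype_compl]; simp [hα, hs]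
  have f : Fin p ≃ {x // ¬ x ∈ s} := (Fintype.equivFinOfCardEq h).symm
  exact ⟨((sumComm _ _).trans (sumCongr g f)).trans (sumCompl (· ∈ s)), g, fun b => by simp⟩

/-- If `F` restricts to the product of `χ p` and `χ q` on each Young subgroup `S_p × S_q` of `S_N`,
then the averages of `χ` against the trivial and sign characters satisfy the degree `N` part of
the reciprocity relation. Up to the factor `1 / N!`, the summand at `(p, q)` is `F` paired with the
`p`-th coefficient of the characteristic polynomial of the permutation matrix. -/
theorem alternating_sum_eq_zero {K : Type*} [Field K] [CharZero K] (N : ℕ) (hN : 0 < N)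
    (F : Perm (Fin N) → K) (χ : (n : ℕ) → Perm (Fin n) → K)
    (hF : ∀ p q, N = p + q → ∀ (e : Fin p ⊕ Fin q ≃ Fin N) (σ : Perm (Fin p)) (τ : Perm (Fin q)),
      F (e.permCongr (Perm.sumCongr σ τ)) = χ p σ * χ q τ) :
    ∑ pq ∈ Finset.HasAntidiagonal.antidiagonal N,
      ((pq.1.factorial : K)⁻¹ * ∑ σ : Perm (Fin pq.1), χ pq.1 σ) *
      ((-1) ^ pq.2 * ((pq.2.factorial : K)⁻¹ *
        ∑ τ : Perm (Fin pq.2), ((Perm.sign τ : ℤ) : K) * χ pq.2 τ)) = 0 := by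
  have : Nonempty (Fin N) := ⟨⟨0, hN⟩⟩
  have hterm : ∀ pq ∈ Finset.HasAntidiagonal.antidiagonal N,
      ((pq.1.factorial : K)⁻¹ * ∑ σ : Perm (Fin pq.1), χ pq.1 σ) *
      ((-1) ^ pq.2 * ((pq.2.factorial : K)⁻¹ *
        ∑ τ : Perm (Fin pq.2), ((Perm.sign τ : ℤ) : K) * χ pq.2 τ))
      = (N.factorial : K)⁻¹ *
        ∑ σ : Perm (Fin N), F σ * (σ.permMatrix K).charpoly.coeff pq.1 := by
    rintro ⟨p, q⟩ hpq
    have hpq : p + q = N := by simpa using hpq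
    have hcoeff : ∀ σ : Perm (Fin N), (σ.permMatrix K).charpoly.coeff p
        = (-1) ^ q * ∑ s ∈ Finset.univ.powersetCard q,
          ((σ.permMatrix K).submatrix (Subtype.val : s → Fin N) Subtype.val).det := by
      intro σ
      rw [← Matrix.charpoly_coeff_eq_sum_minors _ q (by simp; omega)]
      congr 1
      simp; omega
    -- The sum is the same for all subsets of size `q`, as `hF` allows any embedding of `S_p × S_q`.
    have hmin : ∀ s ∈ (Finset.univ : Finset (Fin N)).powersetCard q,
        ∑ σ : Perm (Fin N), F σ *
          ((σ.permMatrix K).submatrix (Subtype.val : s → Fin N) Subtype.val).det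
        = (∑ σ : Perm (Fin p), χ p σ) * ∑ τ : Perm (Fin q), ((Perm.sign τ : ℤ) : K) * χ q τ := by
      intro s hs
      obtain ⟨e, g, hg⟩ := exists_split (p := p) s (by simp [hpq]) (Finset.mem_powersetCard.1 hs).2
      rw [sum_mul_minor_eq F s e g hg, Finset.sum_mul_sum, Fintype.sum_prod_type]
      refine Finset.sum_congr rfl fun σ _ => Finset.sum_congr rfl fun τ _ => ?_
      rw [hF p q hpq.symm]
      ring
    have hsum : ∑ σ : Perm (Fin N), F σ * (σ.permMatrix K).charpoly.coeff p
        = (-1) ^ q * ((N.choose q : K) * ((∑ σ : Perm (Fin p), χ p σ) *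
          ∑ τ : Perm (Fin q), ((Perm.sign τ : ℤ) : K) * χ q τ)) := by
      simp_rw [hcoeff, mul_left_comm (F _), ← Finset.mul_sum]
      congr 1
      rw [Finset.sum_congr rfl (fun σ _ => Finset.mul_sum _ _ _), Finset.sum_comm,
        Finset.sum_congr rfl hmin]
      simp [Finset.card_powersetCard]
    have hfac : (N.factorial : K) = (N.choose q : K) * p.factorial * q.factorial := by
      have := Nat.add_choose_mul_factorial_mul_factorial p q
      rw [hpq] at this
      exact_mod_cast this.symm
    have h1 : (N.choose q : K) ≠ 0 := by
      exact_mod_cast (Nat.choose_pos (by omega)).ne'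
    have h2 : (p.factorial : K) ≠ 0 := by exact_mod_cast p.factorial_ne_zero
    have h3 : (q.factorial : K) ≠ 0 := by exact_mod_cast q.factorial_ne_zero
    dsimp only
    rw [hsum, hfac]
    field_simp
  rw [Finset.sum_congr rfl hterm, ← Finset.mul_sum, Finset.sum_comm]
  simp_rw [← Finset.mul_sum]
  rw [Finset.sum_eq_zero, mul_zero]
  intro σ _
  have := eval_one_charpoly_permMatrix (K := K) σ
  rw [Polynomial.eval_eq_sum_range, Matrix.charpoly_natDegree_eq_dim] at this
  rw [Finset.Nat.sum_antidiagonal_eq_sum_range_succ_mk]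
  simp only [one_pow, mul_one, Fintype.card_fin] at this
  rw [this, mul_zero]
end Combinatorics

/-! ### Concatenation of tensor powers -/

section Tensor

instance W_finite [FiniteDimensional k V] : (m : ℕ) → Module.Finite k (W k V m)
  | 0 => inferInstanceAs (Module.Finite k V)
  | m + 1 =>
    haveI := W_finite m
    inferInstanceAs (Module.Finite k ((W k V m : Type u) ⊗[k] V))

/-- The concatenation isomorphism `V^{⊗(p+1)} ⊗ V^{⊗(q+1)} ≃ V^{⊗(p+q+2)}`, rebracketing to the
left. The index is written `p + 1 + q` so that both the recursion on `q` and the identification of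
`Fin (p + 1 + q + 1)` with `Fin ((p + 1) + (q + 1))` hold definitionally. -/
def tensorW : (p q : ℕ) →
    ((W k V p : Type u) ⊗[k] (W k V q : Type u)) ≃ₗ[k] (W k V (p + 1 + q) : Type u)
  | p, 0 => LinearEquiv.refl k ((W k V p : Type u) ⊗[k] V)
  | p, q + 1 =>
    (TensorProduct.assoc k (W k V p) (W k V q) V).symm.trans
      (TensorProduct.congr (tensorW p q) (LinearEquiv.refl k V))

/-- `x ⊗ v` as an element of `W (m + 1)`, which is `W m ⊗ V` only after unfolding. -/
def snocW (m : ℕ) (x : W k V m) (v : V) : W k V (m + 1) :=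
  (show (W k V m : Type u) ⊗[k] V from x ⊗ₜ[k] v)

/-- The map `y ↦ x ⊗ y` from `V ⊗ V` to `W (m + 2)`. Keeping `y` an arbitrary tensor, rather than
a pure one, makes the action of `R` on the last two factors a formula (`RR_snoc₂`). -/
def snoc₂W (m : ℕ) (x : W k V m) : (V ⊗[k] V) →ₗ[k] (W k V (m + 1 + 1) : Type u) :=
  (TensorProduct.assoc k (W k V m) V V).symm.toLinearMap ∘ₗ
    TensorProduct.mk k (W k V m) (V ⊗[k] V) x

lemma W_ext {m : ℕ} {M : Type*} [AddCommGroup M] [Module k M]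
    (f g : (W k V (m + 1) : Type u) →ₗ[k] M)
    (h : ∀ x v, f (snocW m x v) = g (snocW m x v)) : f = g :=
  TensorProduct.ext' (M := W k V m) (N := V) h

lemma W_ext₂ {m : ℕ} {M : Type*} [AddCommGroup M] [Module k M]
    (f g : (W k V (m + 1 + 1) : Type u) →ₗ[k] M)
    (h : ∀ x y, f (snoc₂W m x y) = g (snoc₂W m x y)) : f = g :=
  W_ext f g fun z v => by
    have : f ∘ₗ (TensorProduct.mk k (W k V (m + 1)) V).flip v
        = g ∘ₗ (TensorProduct.mk k (W k V (m + 1)) V).flip v :=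
      W_ext _ _ fun x u => h x (u ⊗ₜ v)
    exact LinearMap.congr_fun this z

lemma tensorW_zero (p : ℕ) (w : W k V p) (v : V) :
    tensorW (k := k) (V := V) p 0 (w ⊗ₜ[k] (show (W k V 0 : Type u) from v)) = snocW p w v := rfl

lemma tensorW_snoc (p q : ℕ) (w : W k V p) (x : W k V q) (v : V) :
    tensorW p (q + 1) (w ⊗ₜ[k] snocW q x v) =
      snocW (p + 1 + q) (tensorW p q (w ⊗ₜ[k] x)) v := rfl

lemma tensorW_one (p : ℕ) (w : W k V p) (y : V ⊗[k] V) :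
    tensorW (k := k) (V := V) p 1 (w ⊗ₜ[k] (show (W k V 1 : Type u) from y)) =
      snoc₂W p w y :=
  LinearMap.congr_fun (W_ext (m := 0)
    ((tensorW p 1).toLinearMap ∘ₗ TensorProduct.mk k (W k V p) (W k V 1) w)
    (show (W k V 1 : Type u) →ₗ[k] (W k V (p + 1 + 1) : Type u) from snoc₂W p w) fun _ _ => rfl) y

lemma tensorW_snoc₂ (p q : ℕ) (w : W k V p) (x : W k V q) (y : V ⊗[k] V) :
    tensorW p (q + 1 + 1) (w ⊗ₜ[k] snoc₂W q x y) =
      snoc₂W (p + 1 + q) (tensorW p q (w ⊗ₜ[k] x)) y := by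
  induction y using TensorProduct.induction_on with
  | zero => simp
  | add x y hx hy => rw [map_add, TensorProduct.tmul_add, map_add, hx, hy, map_add]
  | tmul x v => rfl

variable (R : (V ⊗[k] V) ≃ₗ[k] V ⊗[k] V)

lemma RR_snoc (m i : ℕ) (h : i + 1 ≤ m + 1) (hi : i + 1 ≤ m) (x : W k V m) (v : V) :
    RR R (m + 1) i h (snocW m x v) = snocW m (RR R m i hi x) v := by
  have : RR R (m + 1) i h = TensorProduct.congr (RR R m i hi) (LinearEquiv.refl k V) := by
    rw [RR]; exact dif_pos hi
  rw [this]; rfl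

lemma RR_one_s11 (h : 0 + 1 ≤ 1) : RR R 1 0 h = R := by
  rw [RR]; exact dif_neg (by omega)

lemma RR_snoc₂ (m i : ℕ) (hi : i = m + 1) (h : i + 1 ≤ m + 1 + 1) (x : W k V m) (y : V ⊗[k] V) :
    RR R (m + 1 + 1) i h (snoc₂W m x y) = snoc₂W m x (R y) := by
  subst hi
  have : RR R (m + 1 + 1) (m + 1) h = (TensorProduct.assoc k (W k V m) V V).trans
          ((TensorProduct.congr (LinearEquiv.refl k (W k V m)) R).trans
            (TensorProduct.assoc k (W k V m) V V).symm) := by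
    rw [RR]; exact dif_neg (by omega)
  rw [this]
  change (TensorProduct.assoc k (W k V m) V V).symm
    (TensorProduct.congr (LinearEquiv.refl k (W k V m)) R (TensorProduct.assoc k (W k V m) V V
      ((TensorProduct.assoc k (W k V m) V V).symm (x ⊗ₜ y)))) = _
  rw [LinearEquiv.apply_symm_apply]
  rfl

/-- Concatenation intertwines `R_{i+1} ⊗ id` with `R_{i+1}`. -/
lemma tensorW_RR_left (p i : ℕ) (hi : i + 1 ≤ p) : ∀ (q : ℕ) (w : W k V p) (x : W k V q),
    tensorW p q (RR R p i hi w ⊗ₜ[k] x)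
      = RR R (p + 1 + q) i (by omega) (tensorW p q (w ⊗ₜ[k] x))
  | 0, w, x => (RR_snoc R p i (by omega) hi w x).symm
  | q + 1, w, x => by
    have := W_ext ((tensorW p (q + 1)).toLinearMap ∘ₗ TensorProduct.mk k _ _ (RR R p i hi w))
      ((RR R (p + 1 + q + 1) i (by omega)).toLinearMap ∘ₗ (tensorW p (q + 1)).toLinearMap ∘ₗ
        TensorProduct.mk k _ _ w) (fun x v => by
          change tensorW p (q + 1) (RR R p i hi w ⊗ₜ[k] snocW q x v) =
            RR R (p + 1 + q + 1) i _ (tensorW p (q + 1) (w ⊗ₜ[k] snocW q x v))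
          rw [tensorW_snoc, tensorW_snoc, tensorW_RR_left p i hi q w x, RR_snoc])
    exact LinearMap.congr_fun this x

/-- Concatenation with a `(p+1)`-fold tensor on the left intertwines `id ⊗ R_{i+1}` with
`R_{p+1+i+1}`. -/
lemma tensorW_RR_right (p : ℕ) : ∀ (q i : ℕ) (hi : i + 1 ≤ q) (w : W k V p) (x : W k V q),
    tensorW p q (w ⊗ₜ[k] RR R q i hi x)
      = RR R (p + 1 + q) (p + 1 + i) (by omega) (tensorW p q (w ⊗ₜ[k] x))
  | q + 1, i, hi, w, x => by
    by_cases hiq : i + 1 ≤ q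
    · have := W_ext ((tensorW p (q + 1)).toLinearMap ∘ₗ TensorProduct.mk k _ _ w ∘ₗ
          (RR R (q + 1) i hi).toLinearMap)
        ((RR R (p + 1 + q + 1) (p + 1 + i) (by omega)).toLinearMap ∘ₗ
          (tensorW p (q + 1)).toLinearMap ∘ₗ TensorProduct.mk k _ _ w) (fun x v => by
            change tensorW p (q + 1) (w ⊗ₜ[k] RR R (q + 1) i hi (snocW q x v)) =
              RR R (p + 1 + q + 1) (p + 1 + i) _ (tensorW p (q + 1) (w ⊗ₜ[k] snocW q x v))
            rw [tensorW_snoc, RR_snoc R q i hi hiq, tensorW_snoc,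
              tensorW_RR_right p q i hiq w x, RR_snoc])
      exact LinearMap.congr_fun this x
    · match q, x with
      | 0, x =>
        obtain rfl : i = 0 := by omega
        rw [RR_one_s11]
        refine (tensorW_one p w (R x)).trans ?_
        refine Eq.trans ?_ (congrArg (RR R (p + 1 + 1) (p + 1 + 0) (by omega))
          (tensorW_one p w x)).symm
        exact (RR_snoc₂ R p (p + 1 + 0) rfl _ w x).symm
      | q + 1, x =>
        have := W_ext₂ ((tensorW p (q + 1 + 1)).toLinearMap ∘ₗ TensorProduct.mk k _ _ w ∘ₗ
            (RR R (q + 1 + 1) i hi).toLinearMap)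
          ((RR R (p + 1 + q + 1 + 1) (p + 1 + i) (by omega)).toLinearMap ∘ₗ
            (tensorW p (q + 1 + 1)).toLinearMap ∘ₗ TensorProduct.mk k _ _ w) (fun x v => by
              change tensorW p (q + 1 + 1) (w ⊗ₜ[k] RR R (q + 1 + 1) i hi (snoc₂W q x v)) =
                RR R (p + 1 + q + 1 + 1) (p + 1 + i) _
                  (tensorW p (q + 1 + 1) (w ⊗ₜ[k] snoc₂W q x v))
              rw [tensorW_snoc₂, RR_snoc₂ R q i (by omega), tensorW_snoc₂,
                RR_snoc₂ R _ _ (by omega)])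
        exact LinearMap.congr_fun this x
end Tensor

/-! ### Characters of the representations -/

section Character
open Equiv

/-- The character of `ρ` on `S_n`. The value `1` at `n = 0` is the trace on `V^{⊗0} = k`; the
representation `ρ m` is the one of `S_{m+1}`, whence the shift. -/
def charW
    (ρ : ∀ n : ℕ, Perm (Fin (n + 1)) →* ((W k V n : Type u) ≃ₗ[k] (W k V n : Type u))) :
    (n : ℕ) → Perm (Fin n) → k
  | 0, _ => 1
  | m + 1, σ => LinearMap.trace k (W k V m) (ρ m σ).toLinearMap

variable (ρ : ∀ n : ℕ, Perm (Fin (n + 1)) →* ((W k V n : Type u) ≃ₗ[k] (W k V n : Type u)))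

lemma symCoeff_eq (n : ℕ) :
    symCoeff ρ n = (n.factorial : k)⁻¹ * ∑ σ : Perm (Fin n), charW ρ n σ := by
  cases n with
  | zero => simp [symCoeff, charW]
  | succ m => simp [symCoeff, charW]

lemma antisymCoeff_eq (n : ℕ) :
    antisymCoeff ρ n = (n.factorial : k)⁻¹ *
      ∑ σ : Perm (Fin n), ((Perm.sign σ : ℤ) : k) * charW ρ n σ := by
  cases n with
  | zero => simp [antisymCoeff, charW]
  | succ m => simp [antisymCoeff, charW]

lemma charW_permCongr {m n : ℕ} (f : Fin m ≃ Fin n) (σ : Perm (Fin m)) :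
    charW ρ n (f.permCongr σ) = charW ρ m σ := by
  obtain rfl : m = n := by simpa using Fintype.card_congr f
  cases m with
  | zero => rfl
  | succ m =>
    have h : f.permCongr σ = f * σ * f⁻¹ := by ext; simp
    rw [h]
    change LinearMap.trace k (W k V m) (ρ m (f * σ * f⁻¹)).toLinearMap = _
    rw [map_mul, map_mul, map_inv]
    exact LinearMap.trace_conj' (ρ m σ).toLinearMap (ρ m f)

variable (R : (V ⊗[k] V) ≃ₗ[k] V ⊗[k] V)
    (hρ : ∀ (n : ℕ) (i : Fin n), ρ n (swap i.castSucc i.succ) = RR R n i i.isLt)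
include hρ

/-- Both sides are multiplicative in `σ`, so the identity reduces to adjacent transpositions,
where it is `tensorW_RR_left`. -/
lemma tensorW_perm_left (p q : ℕ) (σ : Perm (Fin (p + 1))) :
    ∀ (w : W k V p) (x : W k V q), tensorW p q (ρ p σ w ⊗ₜ[k] x)
      = ρ (p + 1 + q) ((finSumFinEquiv (m := p + 1) (n := q + 1)).permCongr (Perm.sumCongr σ 1))
        (tensorW p q (w ⊗ₜ[k] x)) := by
  have hσ : σ ∈ Submonoid.closure (Set.range fun i : Fin p ↦ swap i.castSucc i.succ) := by
    rw [Perm.mclosure_swap_castSucc_succ]; trivial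
  induction hσ using Submonoid.closure_induction with
  | mem σ hσ =>
    obtain ⟨i, rfl⟩ := hσ
    intro w x
    let j : Fin (p + 1 + q) := ⟨i, by omega⟩
    have e : (finSumFinEquiv (m := p + 1) (n := q + 1)).permCongr
        (Perm.sumCongr (swap i.castSucc i.succ) 1) = swap j.castSucc j.succ := by
      rw [Perm.sumCongr_swap_one]
      exact symm_trans_swap_trans _ _ _
    rw [e, hρ, hρ]
    exact tensorW_RR_left R p i i.isLt q w x
  | one =>
    intro w x
    have : (finSumFinEquiv (m := p + 1) (n := q + 1)).permCongr (Perm.sumCongr 1 1) = 1 := by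
      ext; simp
    rw [this, map_one, map_one]; rfl
  | mul σ σ' _ _ h h' =>
    intro w x
    have : (finSumFinEquiv (m := p + 1) (n := q + 1)).permCongr (Perm.sumCongr (σ * σ') 1) =
        (finSumFinEquiv (m := p + 1) (n := q + 1)).permCongr (Perm.sumCongr σ 1) *
        (finSumFinEquiv (m := p + 1) (n := q + 1)).permCongr (Perm.sumCongr σ' 1) := by
      rw [← permCongr_mul, Perm.sumCongr_mul, one_mul]
    rw [this, map_mul, map_mul]
    exact (h _ _).trans (congrArg (ρ (p + 1 + q) _) (h' w x))

lemma tensorW_perm_right (p q : ℕ) (σ : Perm (Fin (q + 1))) :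
    ∀ (w : W k V p) (x : W k V q), tensorW p q (w ⊗ₜ[k] ρ q σ x)
      = ρ (p + 1 + q) ((finSumFinEquiv (m := p + 1) (n := q + 1)).permCongr (Perm.sumCongr 1 σ))
        (tensorW p q (w ⊗ₜ[k] x)) := by
  have hσ : σ ∈ Submonoid.closure (Set.range fun i : Fin q ↦ swap i.castSucc i.succ) := by
    rw [Perm.mclosure_swap_castSucc_succ]; trivial
  induction hσ using Submonoid.closure_induction with
  | mem σ hσ =>
    obtain ⟨i, rfl⟩ := hσ
    intro w x
    let j : Fin (p + 1 + q) := ⟨p + 1 + i, by omega⟩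
    have e : (finSumFinEquiv (m := p + 1) (n := q + 1)).permCongr
        (Perm.sumCongr 1 (swap i.castSucc i.succ)) = swap j.castSucc j.succ := by
      rw [Perm.sumCongr_one_swap]
      exact symm_trans_swap_trans _ _ _
    rw [e, hρ, hρ]
    exact tensorW_RR_right R p q i i.isLt w x
  | one =>
    intro w x
    have : (finSumFinEquiv (m := p + 1) (n := q + 1)).permCongr (Perm.sumCongr 1 1) = 1 := by
      ext; simp
    rw [this, map_one, map_one]; rfl
  | mul σ σ' _ _ h h' =>
    intro w x
    have : (finSumFinEquiv (m := p + 1) (n := q + 1)).permCongr (Perm.sumCongr 1 (σ * σ')) =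
        (finSumFinEquiv (m := p + 1) (n := q + 1)).permCongr (Perm.sumCongr 1 σ) *
        (finSumFinEquiv (m := p + 1) (n := q + 1)).permCongr (Perm.sumCongr 1 σ') := by
      rw [← permCongr_mul, Perm.sumCongr_mul, one_mul]
    rw [this, map_mul, map_mul]
    exact (h _ _).trans (congrArg (ρ (p + 1 + q) _) (h' w x))

lemma charW_finSumFin [FiniteDimensional k V] (p q : ℕ) (σ : Perm (Fin (p + 1)))
    (τ : Perm (Fin (q + 1))) :
    charW ρ (p + 1 + (q + 1)) (finSumFinEquiv.permCongr (Perm.sumCongr σ τ))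
      = charW ρ (p + 1) σ * charW ρ (q + 1) τ := by
  have h : (tensorW p q).conj (TensorProduct.map (ρ p σ).toLinearMap (ρ q τ).toLinearMap)
      = (ρ (p + 1 + q) ((finSumFinEquiv (m := p + 1) (n := q + 1)).permCongr
          (Perm.sumCongr σ τ))).toLinearMap := by
    have hmul : (finSumFinEquiv (m := p + 1) (n := q + 1)).permCongr (Perm.sumCongr σ τ) =
        (finSumFinEquiv (m := p + 1) (n := q + 1)).permCongr (Perm.sumCongr σ 1) *
        (finSumFinEquiv (m := p + 1) (n := q + 1)).permCongr (Perm.sumCongr 1 τ) := by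
      rw [← permCongr_mul, Perm.sumCongr_mul, one_mul, mul_one]
    have h' : (tensorW p q).toLinearMap ∘ₗ
          TensorProduct.map (ρ p σ).toLinearMap (ρ q τ).toLinearMap
        = (ρ (p + 1 + q) ((finSumFinEquiv (m := p + 1) (n := q + 1)).permCongr
          (Perm.sumCongr σ τ))).toLinearMap ∘ₗ (tensorW p q).toLinearMap := by
      refine TensorProduct.ext' fun w x => ?_
      rw [hmul, map_mul]
      refine (tensorW_perm_left ρ R hρ p q σ w (ρ q τ x)).trans ?_
      rw [tensorW_perm_right ρ R hρ p q τ w x]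
      rfl
    ext y
    simpa using LinearMap.congr_fun h' ((tensorW p q).symm y)
  change LinearMap.trace k (W k V (p + 1 + q)) _ =
    LinearMap.trace k (W k V p) _ * LinearMap.trace k (W k V q) _
  rw [← LinearMap.trace_tensorProduct', ← LinearMap.trace_conj' _ (tensorW p q), h]
  rfl

/-- Multiplicativity of the characters: `χ_{p+q}(σ ⊕ τ) = χ_p(σ) χ_q(τ)`, where `σ ⊕ τ` acts on
`Fin (p + q)` through any identification with `Fin p ⊕ Fin q`. -/
lemma charW_sumCongr [FiniteDimensional k V] (N p q : ℕ) (hN : N = p + q)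
    (e : Fin p ⊕ Fin q ≃ Fin N) (σ : Perm (Fin p)) (τ : Perm (Fin q)) :
    charW ρ N (e.permCongr (Perm.sumCongr σ τ)) = charW ρ p σ * charW ρ q τ := by
  match p, q with
  | p + 1, q + 1 =>
    rw [← charW_finSumFin ρ R hρ, ← charW_permCongr ρ (finSumFinEquiv.symm.trans e)]
    congr 1
    ext; simp
  | 0, q =>
    rw [← charW_permCongr ρ ((emptySum (Fin 0) (Fin q)).symm.trans e) τ]
    simp only [charW, one_mul]
    congr 1
    ext i
    obtain ⟨j | j, rfl⟩ := e.surjective i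
    · exact j.elim0
    · simp
  | p, 0 =>
    rw [← charW_permCongr ρ ((sumEmpty (Fin p) (Fin 0)).symm.trans e) σ]
    simp only [charW, mul_one]
    congr 1
    ext i
    obtain ⟨j | j, rfl⟩ := e.surjective i
    · simp
    · exact j.elim0
end Character

/-- for a unitary R-matrix `R` on a finite-dimensional space `V` over a field of
characteristic zero, `(Σ S'_n tⁿ) · (Σ A_n (−t)ⁿ) = 1` in `k[[t]]`. -/
theorem symmetrizer_antisymmetrizer_series_inverse
    [CharZero k] [FiniteDimensional k V]
    (R : (V ⊗[k] V) ≃ₗ[k] V ⊗[k] V)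
    (hR : ∀ v, R (R v) = v)
    (hYB :
      (TensorProduct.congr R (LinearEquiv.refl k V)).trans
        (((TensorProduct.assoc k V V V).trans
            ((TensorProduct.congr (LinearEquiv.refl k V) R).trans
              (TensorProduct.assoc k V V V).symm)).trans
          (TensorProduct.congr R (LinearEquiv.refl k V)))
      = ((TensorProduct.assoc k V V V).trans
            ((TensorProduct.congr (LinearEquiv.refl k V) R).trans
              (TensorProduct.assoc k V V V).symm)).trans
          ((TensorProduct.congr R (LinearEquiv.refl k V)).trans
            ((TensorProduct.assoc k V V V).trans
              ((TensorProduct.congr (LinearEquiv.refl k V) R).trans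
                (TensorProduct.assoc k V V V).symm))))
    (ρ : ∀ n : ℕ, Equiv.Perm (Fin (n + 1)) →* ((W k V n : Type u) ≃ₗ[k] (W k V n : Type u)))
    (hρ : ∀ (n : ℕ) (i : ℕ) (h1 : 1 ≤ i) (h2 : i ≤ n),
      ρ n (Equiv.swap ⟨i - 1, by omega⟩ ⟨i, by omega⟩) = RR R n (i - 1) (by omega)) :
    PowerSeries.mk (symCoeff ρ)
        * PowerSeries.mk (fun n => (-1 : k) ^ n * antisymCoeff ρ n) = 1 := by
  ext N
  rw [PowerSeries.coeff_mul, PowerSeries.coeff_one]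
  simp only [PowerSeries.coeff_mk, symCoeff_eq, antisymCoeff_eq]
  split_ifs with hN
  · subst hN
    simp [charW]
  · exact alternating_sum_eq_zero N (Nat.pos_of_ne_zero hN) (charW ρ N) (charW ρ)
      (charW_sumCongr ρ R (fun n i => hρ n (i + 1) (by omega) (by omega)) N)

end
end

section
/- Let Λ = ℤ[e₁, e₂, e₃, …] be the polynomial ring over ℤ in countably many variables, graded by deg(e_n) = n, with e₀ = 1 and e_m = 0 for m < 0. For a partition μ with dual partition μ′ = (μ′₁, …, μ′_r) (where μ′_i = #{j : μ_j ≥ i}), define the Schur element s_μ = det( e_{μ′_i − i + j} )_{1 ≤ i,j ≤ r}. Let f : Λ → Λ be a ring homomorphism that preserves the grading (maps homogeneous elements of degree N to homogeneous elements of degree N), satisfies f(e₁) = e₁ and f(e₂) = e₂, and is such that for every partition μ, f(s_μ) is a linear combination with non-negative integer coefficients of the elements s_ν. Then f is the identity map. -/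
/-!
The Schur elements are linearly independent (`schur_linearIndependent`): give `e_k` degree `k ^ 2`.
The terms of the determinant `s_μ` are, up to sign, the products `∏ e_{l (σ i) + i}` with
`l i = μ′_i - i` strictly decreasing, and by the rearrangement inequality the diagonal term
`∏ e_{μ′_i}` is the only one of lowest degree. As `μ ↦ ∏ e_{μ′_i}` is injective, the family is
triangular with respect to the monomial basis.

Coefficients in the Schur family can therefore be compared. By induction on `n`, assume that `f` fixes
`e_k` for `k < n`. The Schur element of the hook `(k, 1^{n-k})` is `(-1)^{k-1} e_n` plus a polynomial
in `e_1, …, e_{n-1}`, so with `d = f e_n - e_n` its image is itself plus `(-1)^{k-1} d`.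
For `n ≥ 4`, positivity of the images for `k = 1, 2, 3, 4` forces `d = 0` (`map_eElt_of_four_le`).
For `n = 3` it forces `d = 0` or `d = s_{21}`, and the second case is excluded by positivity of
`f s_{22}` (`map_eElt_three`).
-/

noncomputable section

/-- `Λ = ℤ[e₁, e₂, e₃, …]`: the polynomial ring in countably many variables, where the
variable `X i` represents `e_{i+1}`. -/
abbrev Lam : Type := MvPolynomial ℕ ℤ

/-- The element `e_n` of `Λ` for `n : ℤ`, with `e₀ = 1` and `e_m = 0` for `m < 0`. -/
def eElt (n : ℤ) : Lam :=
  if n < 0 then 0 else if n = 0 then 1 else MvPolynomial.X (n.toNat - 1)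

/-- The parts of the dual partition: `μ′_i = #{j : μ_j ≥ i}`. -/
def dualPart {n : ℕ} (μ : Nat.Partition n) (i : ℕ) : ℕ :=
  (μ.parts.filter (fun j => i ≤ j)).card

/-- The number of parts of the dual partition `μ′`, i.e. the largest part of `μ`. -/
def dualLength {n : ℕ} (μ : Nat.Partition n) : ℕ := μ.parts.sup

/-- The Schur element `s_μ = det (e_{μ′_i − i + j})_{1 ≤ i,j ≤ r}` of `Λ` (dual Jacobi–Trudi
determinant), where `μ′` is the dual partition of `μ` and `r` its number of parts. -/
def schur {n : ℕ} (μ : Nat.Partition n) : Lam :=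
  (Matrix.of fun i j : Fin (dualLength μ) =>
    eElt ((dualPart μ ((i : ℕ) + 1) : ℤ) - ((i : ℕ) + 1) + ((j : ℕ) + 1))).det


/-! ### Linear independence of the Schur elements -/

open MvPolynomial in
theorem eElt_of_pos (k : ℕ) : eElt ((k : ℤ) + 1) = X k := by
  unfold eElt
  rw [if_neg (by omega), if_neg (by omega)]
  congr 1

theorem eElt_zero : eElt 0 = 1 := by simp [eElt]

theorem eElt_of_neg {z : ℤ} (hz : z < 0) : eElt z = 0 := by simp [eElt, hz]

/-- The degree function giving `e_k` degree `k ^ 2` (recall that `X i` is `e_{i+1}`). The monomial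
`∏ e_{λ_i}` then has degree `∑ λ_i ^ 2`, which orders the monomials occurring in a Schur element. -/
def sqWeight (i : ℕ) : ℤ := ((i : ℤ) + 1) ^ 2

open MvPolynomial in
/-- This includes `z ≤ 0`: there `eElt z` is `1` in degree `0`, or zero, which is homogeneous of
every degree. -/
theorem eElt_isWeightedHomogeneous (z : ℤ) :
    IsWeightedHomogeneous sqWeight (eElt z) (z ^ 2) := by
  rcases lt_trichotomy z 0 with h | rfl | h
  · rw [eElt_of_neg h]
    exact isWeightedHomogeneous_zero _ _ _
  · rw [eElt_zero]
    simpa using isWeightedHomogeneous_one ℤ sqWeight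
  · obtain ⟨k, rfl⟩ : ∃ k : ℕ, z = (k : ℤ) + 1 := ⟨(z - 1).toNat, by omega⟩
    rw [eElt_of_pos]
    exact isWeightedHomogeneous_X ℤ sqWeight k

theorem dualPart_antitone {n : ℕ} (μ : Nat.Partition n) : Antitone (dualPart μ) := fun _ _ h =>
  Multiset.card_le_card (Multiset.monotone_filter_right _ fun _ h' => h.trans h')

theorem dualPart_pos {n : ℕ} (μ : Nat.Partition n) {i : ℕ} (hi : i < dualLength μ) :
    0 < dualPart μ (i + 1) := by
  unfold dualPart
  rw [Multiset.card_pos_iff_exists_mem]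
  by_contra! h
  simp only [Multiset.mem_filter, not_and] at h
  have : dualLength μ ≤ i := Multiset.sup_le.2 fun b hb => by
    have := h b hb; omega
  omega

theorem dualPart_eq_zero {n : ℕ} (μ : Nat.Partition n) {i : ℕ} (hi : dualLength μ < i) :
    dualPart μ i = 0 := by
  unfold dualPart
  rw [Multiset.card_eq_zero, Multiset.filter_eq_nil]
  intro a ha h
  have := Multiset.le_sup ha
  unfold dualLength at hi
  omega

/-- The nonzero parts of the dual partition, as a multiset, each decreased by one: the indices of
the variables occurring in `∏ e_{μ′_i}`. -/
def dualMultiset {n : ℕ} (μ : Nat.Partition n) : Multiset ℕ :=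
  ((List.range (dualLength μ)).map fun i => dualPart μ (i + 1) - 1 : List ℕ)

/-- The multiset determines the sequence of dual parts, because that sequence is decreasing. -/
theorem dualPart_eq_of_dualMultiset_eq {n m : ℕ} {μ : Nat.Partition n} {ν : Nat.Partition m}
    (h : dualMultiset μ = dualMultiset ν) {i : ℕ} (hi : 1 ≤ i) : dualPart μ i = dualPart ν i := by
  have sorted : ∀ {n : ℕ} (μ : Nat.Partition n),
      ((List.range (dualLength μ)).map fun i => dualPart μ (i + 1) - 1).Pairwise (· ≥ ·) := by
    intro n μ
    rw [List.pairwise_map]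
    refine List.pairwise_lt_range.imp fun {a b} hab => ?_
    have := dualPart_antitone μ (show a + 1 ≤ b + 1 by omega)
    omega
  have key := List.Perm.eq_of_pairwise' (sorted μ) (sorted ν) (Multiset.coe_eq_coe.1 h)
  have hlen : dualLength μ = dualLength ν := by simpa using congrArg List.length key
  rw [← hlen] at key
  obtain ⟨j, rfl⟩ := Nat.exists_eq_add_of_le' hi
  by_cases hj : j < dualLength μ
  · have h1 := List.map_inj_left.1 key j (List.mem_range.2 hj)
    have := dualPart_pos μ hj
    have := dualPart_pos ν (hlen ▸ hj)
    omega
  · rw [dualPart_eq_zero μ (by omega), dualPart_eq_zero ν (by omega)]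

theorem count_parts {n : ℕ} (μ : Nat.Partition n) (j : ℕ) :
    μ.parts.count j + dualPart μ (j + 1) = dualPart μ j := by
  unfold dualPart
  induction μ.parts using Multiset.induction_on with
  | empty => simp
  | cons a s ih =>
    simp only [Multiset.count_cons, Multiset.filter_cons, Multiset.card_add]
    rcases lt_trichotomy a j with h | h | h
    · rw [if_neg (by omega), if_neg (by omega), if_neg (by omega)]; simpa using ih
    · rw [if_pos (by omega), if_neg (by omega), if_pos (by omega)]
      rw [Multiset.card_singleton, Multiset.card_zero]; omega
    · rw [if_neg (by omega), if_pos (by omega), if_pos (by omega)]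
      rw [Multiset.card_singleton]; omega

theorem sigma_eq_of_dualMultiset_eq {x y : Σ m : ℕ, Nat.Partition m}
    (h : dualMultiset x.2 = dualMultiset y.2) : x = y := by
  obtain ⟨n, μ⟩ := x
  obtain ⟨m, ν⟩ := y
  have hp : μ.parts = ν.parts := by
    ext j
    rcases Nat.eq_zero_or_pos j with rfl | hj
    · rw [Multiset.count_eq_zero_of_notMem fun h => (μ.parts_pos h).ne rfl,
        Multiset.count_eq_zero_of_notMem fun h => (ν.parts_pos h).ne rfl]
    · have h1 := count_parts μ j
      have h2 := count_parts ν j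
      have h3 := dualPart_eq_of_dualMultiset_eq h hj
      have h4 := dualPart_eq_of_dualMultiset_eq h (show 1 ≤ j + 1 by omega)
      dsimp only at h3 h4
      omega
  obtain rfl : n = m := by rw [← μ.parts_sum, ← ν.parts_sum, hp]
  rw [Nat.Partition.ext hp]

/-- The exponent of the monomial `∏ e_{μ′_i}`, the diagonal term of the determinant `s_μ`. -/
def lead {n : ℕ} (μ : Nat.Partition n) : ℕ →₀ ℕ :=
  ∑ i : Fin (dualLength μ), Finsupp.single (dualPart μ ((i : ℕ) + 1) - 1) 1

theorem sigma_eq_of_lead_eq {x y : Σ m : ℕ, Nat.Partition m} (h : lead x.2 = lead y.2) :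
    x = y := by
  have key : ∀ {n : ℕ} (μ : Nat.Partition n), dualMultiset μ = Finsupp.toMultiset (lead μ) := by
    intro n μ
    rw [lead, map_sum]
    simp only [Finsupp.toMultiset_single, one_smul]
    rw [Fin.sum_univ_eq_sum_range (fun i => ({dualPart μ (i + 1) - 1} : Multiset ℕ)),
      dualMultiset, ← Multiset.map_coe, Multiset.coe_range, Finset.sum_eq_multiset_sum,
      Finset.range_val]
    rw [← Multiset.sum_map_singleton (Multiset.map _ _), Multiset.map_map]
    rfl
  exact sigma_eq_of_dualMultiset_eq (by rw [key, key, h])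

open MvPolynomial in
theorem prod_diag {n : ℕ} (μ : Nat.Partition n) :
    ∏ i : Fin (dualLength μ), eElt (dualPart μ ((i : ℕ) + 1)) = monomial (lead μ) 1 := by
  rw [lead, monomial_sum_one]
  refine Finset.prod_congr rfl fun i _ => ?_
  have := dualPart_pos μ i.2
  rw [← MvPolynomial.X, ← eElt_of_pos]
  congr 1
  omega

open MvPolynomial in
theorem weight_lead {n : ℕ} (μ : Nat.Partition n) : Finsupp.weight sqWeight (lead μ) =
    ∑ i : Fin (dualLength μ), (dualPart μ ((i : ℕ) + 1) : ℤ) ^ 2 := by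
  rw [lead, map_sum]
  refine Finset.sum_congr rfl fun i _ => ?_
  have := dualPart_pos μ i.2
  rw [Finsupp.weight_single, sqWeight, one_smul]
  congr 1
  omega

/-- Expanding the squares, this is the strict rearrangement inequality for `∑ l i * i`. -/
theorem sum_sq_lt_of_perm {r : ℕ} {l : Fin r → ℤ} (hl : StrictAnti l) {σ : Equiv.Perm (Fin r)}
    (hσ : σ ≠ 1) :
    ∑ i, (l i + (i : ℕ)) ^ 2 < ∑ i, (l (σ i) + (i : ℕ)) ^ 2 := by
  have hanti : Antivary l (fun i : Fin r => ((i : ℕ) : ℤ)) := fun i j hij =>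
    (hl (by simpa using hij)).le
  have hlt : ∑ i, l i * ((i : ℕ) : ℤ) < ∑ i, l (σ i) * ((i : ℕ) : ℤ) := by
    rw [hanti.sum_mul_lt_sum_comp_perm_mul_iff]
    intro h
    apply hσ
    have hmono : StrictMono σ := by
      intro i j hij
      have h1 : l (σ j) ≤ l (σ i) := h (show ((i : ℕ) : ℤ) < (j : ℕ) by simpa using hij)
      exact lt_of_le_of_ne (hl.le_iff_ge.1 h1) fun h2 => hij.ne (σ.injective h2)
    have := Subsingleton.elim (hmono.orderIsoOfSurjective σ σ.surjective) (OrderIso.refl _)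
    ext i
    simpa using congrArg (fun e => ((e i : Fin r) : ℕ)) this
  have hsq : ∑ i, l (σ i) ^ 2 = ∑ i, l i ^ 2 := Equiv.sum_comp σ fun i => l i ^ 2
  have e1 : ∀ m : Fin r → ℤ, ∑ i, (m i + (i : ℕ)) ^ 2 =
      ∑ i, m i ^ 2 + 2 * ∑ i, m i * ((i : ℕ) : ℤ) + ∑ i : Fin r, ((i : ℕ) : ℤ) ^ 2 := by
    intro m
    rw [Finset.mul_sum, ← Finset.sum_add_distrib, ← Finset.sum_add_distrib]
    exact Finset.sum_congr rfl fun i _ => by ring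
  rw [e1 l, e1 fun i => l (σ i), hsq]
  linarith

open MvPolynomial in
/-- Triangularity of the Schur elements: the diagonal term is the unique term of `s_μ` of lowest
degree for `sqWeight`. -/
theorem schur_eq_lead_add {n : ℕ} (μ : Nat.Partition n) : ∃ p : Lam,
    schur μ = monomial (lead μ) 1 + p ∧
    ∀ m, coeff m p ≠ 0 → Finsupp.weight sqWeight (lead μ) < Finsupp.weight sqWeight m := by
  set l : Fin (dualLength μ) → ℤ := fun i => (dualPart μ ((i : ℕ) + 1) : ℤ) - (i : ℕ) with hl
  have hl' : StrictAnti l := by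
    intro i j hij
    have := dualPart_antitone μ (show (i : ℕ) + 1 ≤ (j : ℕ) + 1 by simpa using hij.le)
    have : (i : ℕ) < j := hij
    simp only [hl]
    omega
  have hdet : schur μ = ∑ σ : Equiv.Perm (Fin (dualLength μ)),
      Equiv.Perm.sign σ • ∏ i, eElt (l (σ i) + (i : ℕ)) := by
    rw [schur, Matrix.det_apply]
    refine Finset.sum_congr rfl fun σ _ => ?_
    congr 1
    refine Finset.prod_congr rfl fun i _ => ?_
    simp only [Matrix.of_apply, hl]
    congr 1
    ring
  refine ⟨∑ σ ∈ Finset.univ.erase (1 : Equiv.Perm (Fin (dualLength μ))),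
      Equiv.Perm.sign σ • ∏ i, eElt (l (σ i) + (i : ℕ)), ?_, ?_⟩
  · rw [hdet, ← Finset.add_sum_erase _ _ (Finset.mem_univ 1), ← prod_diag]
    simp [hl]
  · intro m hm
    rw [coeff_sum] at hm
    obtain ⟨σ, hσ, hm⟩ := Finset.exists_ne_zero_of_sum_ne_zero hm
    have hne : coeff m (∏ i, eElt (l (σ i) + (i : ℕ))) ≠ 0 := by
      intro h0
      apply hm
      rw [Units.smul_def, coeff_smul, h0, smul_zero]
    have hw := IsWeightedHomogeneous.prod Finset.univ
      (fun i => eElt (l (σ i) + (i : ℕ))) _ fun i _ => eElt_isWeightedHomogeneous _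
    rw [hw hne, weight_lead]
    simpa [hl] using sum_sq_lt_of_perm hl' (Finset.ne_of_mem_erase hσ)

open MvPolynomial in
/-- In a vanishing combination, look at the leading monomial of lowest `sqWeight`. -/
theorem schur_linearIndependent :
    LinearIndependent ℤ (fun x : Σ m : ℕ, Nat.Partition m => schur x.2) := by
  classical
  rw [linearIndependent_iff']
  intro S g hg
  by_contra! hne
  obtain ⟨y, hy, hy0⟩ := hne
  obtain ⟨x, hx, hmin⟩ := (S.filter fun x => g x ≠ 0).exists_min_image
    (fun x => Finsupp.weight sqWeight (lead x.2)) ⟨y, by simp [hy, hy0]⟩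
  rw [Finset.mem_filter] at hx
  apply hx.2
  have h0 := congrArg (coeff (lead x.2)) hg
  rw [coeff_sum, coeff_zero, Finset.sum_eq_single_of_mem x hx.1] at h0
  · obtain ⟨p, hp, hp'⟩ := schur_eq_lead_add x.2
    have : coeff (lead x.2) p = 0 := by
      by_contra h
      exact lt_irrefl _ (hp' _ h)
    rw [coeff_smul, hp, coeff_add, this] at h0
    simpa using h0
  · intro z hz hzx
    by_cases hgz : g z = 0
    · simp [hgz]
    obtain ⟨p, hp, hp'⟩ := schur_eq_lead_add z.2
    have h1 : coeff (lead x.2) p = 0 := by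
      by_contra h
      exact absurd (hmin z (by simp [hz, hgz])) (not_le.2 (hp' _ h))
    have h2 : lead z.2 ≠ lead x.2 := fun h => hzx (sigma_eq_of_lead_eq h)
    rw [coeff_smul, hp, coeff_add, h1, coeff_monomial, if_neg h2, add_zero, smul_zero]

/-! ### Schur elements of hooks -/

/-- The hook partition `(k + 1, 1, …, 1)`, where `m` parts `1` follow the part `k + 1`. -/
def hook (k m : ℕ) : Nat.Partition (k + 1 + m) where
  parts := (k + 1) ::ₘ Multiset.replicate m 1
  parts_pos := by
    intro i hi
    rcases Multiset.mem_cons.1 hi with h | h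
    · omega
    · rw [Multiset.eq_of_mem_replicate h]; omega
  parts_sum := by simp

theorem hook_parts (k m : ℕ) : (hook k m).parts = (k + 1) ::ₘ Multiset.replicate m 1 := rfl

theorem dualLength_hook (k m : ℕ) : dualLength (hook k m) = k + 1 := by
  refine le_antisymm (Multiset.sup_le.2 fun b hb => ?_)
    (Multiset.le_sup (s := (hook k m).parts) (by simp [hook_parts]))
  rw [hook_parts] at hb
  rcases Multiset.mem_cons.1 hb with h | h
  · exact h.le
  · rw [Multiset.eq_of_mem_replicate h]; omega

theorem dualPart_hook_one (k m : ℕ) : dualPart (hook k m) 1 = m + 1 := by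
  unfold dualPart
  rw [Multiset.filter_eq_self.2 fun a ha => Nat.succ_le_of_lt ((hook k m).parts_pos ha)]
  simp [hook]

theorem dualPart_hook {k m i : ℕ} (h2 : 2 ≤ i) (hi : i ≤ k + 1) : dualPart (hook k m) i = 1 := by
  unfold dualPart hook
  rw [Multiset.filter_cons_of_pos _ hi, Multiset.filter_eq_nil.2, Multiset.card_cons,
    Multiset.card_zero]
  intro a ha
  rw [Multiset.eq_of_mem_replicate ha]
  omega

/-- The partition `(2, 2)`. -/
def twoTwo : Nat.Partition 4 where
  parts := {2, 2}
  parts_pos := by simp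
  parts_sum := by simp

/-- The determinant with its size `r` free of `μ`, so that formulas for a fixed size apply. -/
theorem schur_eq_det {n r : ℕ} (μ : Nat.Partition n) (h : dualLength μ = r) :
    schur μ = (Matrix.of fun i j : Fin r =>
      eElt ((dualPart μ ((i : ℕ) + 1) : ℤ) - ((i : ℕ) + 1) + ((j : ℕ) + 1))).det := by
  subst h
  rfl

theorem schur_hook_zero (m : ℕ) : schur (hook 0 m) = eElt (m + 1) := by
  rw [schur_eq_det _ (r := 1) (dualLength_hook 0 m), Matrix.det_unique]
  simp [dualPart_hook_one]

theorem schur_hook_one (m : ℕ) :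
    schur (hook 1 m) = eElt (m + 1) * eElt 1 - eElt (m + 2) := by
  rw [schur_eq_det _ (dualLength_hook 1 m), Matrix.det_fin_two]
  simp [dualPart_hook_one, dualPart_hook, eElt_zero]

theorem schur_hook_two (m : ℕ) :
    schur (hook 2 m) = eElt (m + 1) * (eElt 1 ^ 2 - eElt 2) - eElt (m + 2) * eElt 1
      + eElt (m + 3) := by
  rw [schur_eq_det _ (dualLength_hook 2 m), Matrix.det_fin_three]
  simp [dualPart_hook_one, dualPart_hook, eElt_zero]
  simp [eElt_of_neg]
  ring

theorem schur_hook_three (m : ℕ) :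
    schur (hook 3 m) = eElt (m + 1) * (eElt 1 ^ 3 - 2 * eElt 1 * eElt 2 + eElt 3)
      - eElt (m + 2) * (eElt 1 ^ 2 - eElt 2) + eElt (m + 3) * eElt 1 - eElt (m + 4) := by
  rw [schur_eq_det _ (dualLength_hook 3 m), Matrix.det_succ_row_zero]
  simp [Fin.sum_univ_succ, Matrix.det_fin_three, dualPart_hook_one, dualPart_hook, eElt_zero,
    Fin.succAbove]
  simp [eElt_of_neg]
  ring

theorem schur_twoTwo : schur twoTwo = eElt 2 ^ 2 - eElt 3 * eElt 1 := by
  have h : dualLength twoTwo = 2 := rfl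
  have h1 : dualPart twoTwo 1 = 2 := by decide
  have h2 : dualPart twoTwo 2 = 2 := by decide
  rw [schur_eq_det _ h, Matrix.det_fin_two]
  simp [h1, h2]
  ring

/-! ### Determination of the endomorphism -/

/-- A non-negative combination of Schur elements, rewritten as a `Finsupp.linearCombination`. -/
theorem exists_nonneg_finsupp {p : Lam}
    (h : ∃ (S : Finset (Σ m : ℕ, Nat.Partition m)) (c : (Σ m : ℕ, Nat.Partition m) → ℕ),
        p = ∑ x ∈ S, (c x : ℤ) • schur x.2) :
    ∃ a : (Σ m : ℕ, Nat.Partition m) →₀ ℤ, (∀ x, 0 ≤ a x) ∧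
      p = Finsupp.linearCombination ℤ (fun x : Σ m : ℕ, Nat.Partition m => schur x.2) a := by
  classical
  obtain ⟨S, c, rfl⟩ := h
  refine ⟨∑ x ∈ S, Finsupp.single x (c x : ℤ), fun x => ?_, ?_⟩
  · rw [Finsupp.finsetSum_apply]
    refine Finset.sum_nonneg fun y _ => ?_
    rw [Finsupp.single_apply]
    split <;> simp
  · rw [map_sum]
    simp only [Finsupp.linearCombination_single]

/-- The hook partition `hook k m` as an index of the family of all Schur elements. -/
def hookIdx (k m : ℕ) : Σ m : ℕ, Nat.Partition m := ⟨_, hook k m⟩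

theorem hookIdx_ne {k l : ℕ} (h : k ≠ l) (m m' : ℕ) : hookIdx k m ≠ hookIdx l m' := by
  intro e
  have := congrArg (fun x : Σ m : ℕ, Nat.Partition m => dualLength x.2) e
  simp only [hookIdx, dualLength_hook] at this
  omega

theorem schur_comb_eq {a b : (Σ m : ℕ, Nat.Partition m) →₀ ℤ}
    (h : Finsupp.linearCombination ℤ (fun x : Σ m : ℕ, Nat.Partition m => schur x.2) a =
      Finsupp.linearCombination ℤ (fun x : Σ m : ℕ, Nat.Partition m => schur x.2) b)
    (x : Σ m : ℕ, Nat.Partition m) : a x = b x := by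
  rw [schur_linearIndependent h]

theorem linearCombination_hookIdx (k m : ℕ) :
    Finsupp.linearCombination ℤ (fun x : Σ m : ℕ, Nat.Partition m => schur x.2)
      (Finsupp.single (hookIdx k m) 1) = schur (hook k m) := by
  simp [hookIdx]

/-- The inductive step in degree `n = m + 4`. Write `E, H₁, H₂, H₃` for the hook Schur elements with
first part `1, 2, 3, 4`. The relations `E + H₁ = e_{n-1} e₁`, `E - H₂ = …`, `H₁ - H₃ = …` have
right-hand sides fixed by `f`, so `f E + f H₁ = E + H₁`, `f E + H₂ = f H₂ + E` and
`f H₁ + H₃ = f H₃ + H₁`. Comparing coefficients, `E` occurs in `f E` and `H₁` in `f H₁`, which with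
the first equation leaves only `f E = E`. -/
theorem map_eElt_of_four_le (f : Lam →+* Lam)
    (hpos : ∀ (n : ℕ) (μ : Nat.Partition n),
      ∃ (S : Finset (Σ m : ℕ, Nat.Partition m)) (c : (Σ m : ℕ, Nat.Partition m) → ℕ),
        f (schur μ) = ∑ x ∈ S, (c x : ℤ) • schur x.2) (m : ℕ)
    (h1 : f (eElt 1) = eElt 1) (h2 : f (eElt 2) = eElt 2) (h3 : f (eElt 3) = eElt 3)
    (hm1 : f (eElt (m + 1)) = eElt (m + 1)) (hm2 : f (eElt (m + 2)) = eElt (m + 2))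
    (hm3 : f (eElt (m + 3)) = eElt (m + 3)) : f (eElt (m + 4)) = eElt (m + 4) := by
  classical
  have s0 := schur_hook_zero (m + 3)
  have s1 := schur_hook_one (m + 2)
  have s2 := schur_hook_two (m + 1)
  have s3 := schur_hook_three m
  push_cast at s0 s1 s2
  simp only [add_assoc] at s0 s1 s2
  norm_num at s0 s1 s2
  obtain ⟨a, ha, ha'⟩ := exists_nonneg_finsupp (hpos _ (hook 0 (m + 3)))
  obtain ⟨b, hb, hb'⟩ := exists_nonneg_finsupp (hpos _ (hook 1 (m + 2)))
  obtain ⟨c, hc, hc'⟩ := exists_nonneg_finsupp (hpos _ (hook 2 (m + 1)))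
  obtain ⟨d, hd, hd'⟩ := exists_nonneg_finsupp (hpos _ (hook 3 m))
  have e0 := linearCombination_hookIdx 0 (m + 3)
  have e1 := linearCombination_hookIdx 1 (m + 2)
  have e2 := linearCombination_hookIdx 2 (m + 1)
  have e3 := linearCombination_hookIdx 3 m
  rw [s0] at ha' e0
  rw [s1] at hb' e1
  rw [s2] at hc' e2
  rw [s3] at hd' e3
  simp only [map_add, map_sub, map_mul, map_pow, map_ofNat, h1, h2, h3, hm1, hm2, hm3]
    at ha' hb' hc' hd'
  have n01 := hookIdx_ne (show 0 ≠ 1 by omega) (m + 3) (m + 2)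
  have n02 := hookIdx_ne (show 0 ≠ 2 by omega) (m + 3) (m + 1)
  have n13 := hookIdx_ne (show 1 ≠ 3 by omega) (m + 2) m
  have n03 := hookIdx_ne (show 0 ≠ 3 by omega) (m + 3) m
  set x0 := hookIdx 0 (m + 3)
  set x1 := hookIdx 1 (m + 2)
  set x2 := hookIdx 2 (m + 1)
  set x3 := hookIdx 3 m
  have r1 := schur_comb_eq (a := a + b) (b := Finsupp.single x0 1 + Finsupp.single x1 1)
    (by rw [map_add, map_add, e0, e1, ← ha', ← hb']; ring)
  have r2 := schur_comb_eq (a := a + Finsupp.single x2 1) (b := c + Finsupp.single x0 1)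
    (by rw [map_add, map_add, e0, e2, ← ha', ← hc']; ring)
  have r3 := schur_comb_eq (a := b + Finsupp.single x3 1) (b := d + Finsupp.single x1 1)
    (by rw [map_add, map_add, e1, e3, ← hb', ← hd']; ring)
  simp only [Finsupp.add_apply, Finsupp.single_apply] at r1 r2 r3
  have ha0 : a = Finsupp.single x0 1 := by
    ext x
    rw [Finsupp.single_apply]
    have := r1 x
    have := ha x
    have := hb x
    by_cases hx0 : x0 = x
    · subst hx0
      have := r2 x0
      have := hc x0
      simp only [n01.symm, n02.symm, if_true, if_false] at *
      omega
    · by_cases hx1 : x1 = x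
      · subst hx1
        have := r3 x1
        have := hd x1
        simp only [n01, n13.symm, if_true, if_false] at *
        omega
      · simp only [hx0, hx1, if_false] at *
        omega
  rw [ha', ha0, e0]

/-- In degree `3` there are only the hooks with first part `1, 2, 3`, which leave the possibilities
`f e₃ = e₃` and `f e₃ = e₃ + s_{21} = e₁ e₂`. The second gives
`f s_{22} = e₂ ^ 2 - e₁ ^ 2 e₂ = -(s_{31} + s_{211})`, which is not Schur positive. -/
theorem map_eElt_three (f : Lam →+* Lam)
    (hpos : ∀ (n : ℕ) (μ : Nat.Partition n),
      ∃ (S : Finset (Σ m : ℕ, Nat.Partition m)) (c : (Σ m : ℕ, Nat.Partition m) → ℕ),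
        f (schur μ) = ∑ x ∈ S, (c x : ℤ) • schur x.2)
    (h1 : f (eElt 1) = eElt 1) (h2 : f (eElt 2) = eElt 2) : f (eElt 3) = eElt 3 := by
  classical
  have s0 := schur_hook_zero 2
  have s1 := schur_hook_one 1
  have s2 := schur_hook_two 0
  have t2 := schur_hook_two 1
  have t1 := schur_hook_one 2
  norm_num at s0 s1 s2 t1 t2
  obtain ⟨a, ha, ha'⟩ := exists_nonneg_finsupp (hpos _ (hook 0 2))
  obtain ⟨b, hb, hb'⟩ := exists_nonneg_finsupp (hpos _ (hook 1 1))
  obtain ⟨c, hc, hc'⟩ := exists_nonneg_finsupp (hpos _ (hook 2 0))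
  obtain ⟨d, hd, hd'⟩ := exists_nonneg_finsupp (hpos _ twoTwo)
  have e0 := linearCombination_hookIdx 0 2
  have e1 := linearCombination_hookIdx 1 1
  have e2 := linearCombination_hookIdx 2 0
  have e3 := linearCombination_hookIdx 2 1
  have e4 := linearCombination_hookIdx 1 2
  rw [s0] at ha' e0
  rw [s1] at hb' e1
  rw [s2] at hc' e2
  rw [schur_twoTwo] at hd'
  rw [t2] at e3
  rw [t1] at e4
  simp only [map_add, map_sub, map_mul, map_pow, h1, h2] at ha' hb' hc' hd'
  have n01 := hookIdx_ne (show 0 ≠ 1 by omega) 2 1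
  have n02 := hookIdx_ne (show 0 ≠ 2 by omega) 2 0
  set x0 := hookIdx 0 2
  set x1 := hookIdx 1 1
  set x2 := hookIdx 2 0
  set x3 := hookIdx 2 1
  set x4 := hookIdx 1 2
  have r1 := schur_comb_eq (a := a + b) (b := Finsupp.single x0 1 + Finsupp.single x1 1)
    (by rw [map_add, map_add, e0, e1, ← ha', ← hb']; ring)
  have r2 := schur_comb_eq (a := a + Finsupp.single x2 1) (b := c + Finsupp.single x0 1)
    (by rw [map_add, map_add, e0, e2, ← ha', ← hc']; ring)
  simp only [Finsupp.add_apply, Finsupp.single_apply] at r1 r2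
  have a0 : a x0 = 1 := by
    have := r1 x0
    have := r2 x0
    have := hb x0
    have := hc x0
    simp only [n01.symm, n02.symm, if_true, if_false] at *
    omega
  have aout : ∀ x, x0 ≠ x → x1 ≠ x → a x = 0 := by
    intro x hx0 hx1
    have := r1 x
    have := ha x
    have := hb x
    simp only [hx0, hx1, if_false] at *
    omega
  -- Excludes `f e₃ = e₃ + s_{21}` by applying `f` to `s_{22}`.
  have a1 : a x1 = 0 := by
    by_contra hne
    have a1' : a x1 = 1 := by
      have := r1 x1
      have := ha x1
      have := hb x1
      simp only [n01, if_true, if_false] at *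
      omega
    have haeq : a = Finsupp.single x0 1 + Finsupp.single x1 1 := by
      ext x
      simp only [Finsupp.add_apply, Finsupp.single_apply]
      by_cases hx0 : x0 = x
      · subst hx0; simp [a0, n01.symm]
      · by_cases hx1 : x1 = x
        · subst hx1; simp [a1', n01]
        · simp [hx0, hx1, aout x hx0 hx1]
    rw [haeq, map_add, e0, e1] at ha'
    have r3 := schur_comb_eq (a := d + Finsupp.single x3 1 + Finsupp.single x4 1) (b := 0)
      (by rw [map_add, map_add, e3, e4, ← hd', ha', map_zero]; ring) x3
    have := hd x3
    simp only [Finsupp.add_apply, Finsupp.single_apply, Finsupp.zero_apply, if_true] at r3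
    split at r3 <;> omega
  have haeq : a = Finsupp.single x0 1 := by
    ext x
    rw [Finsupp.single_apply]
    by_cases hx0 : x0 = x
    · subst hx0; simp [a0]
    · by_cases hx1 : x1 = x
      · subst hx1; simp [a1, n01]
      · simp [hx0, aout x hx0 hx1]
  rw [ha', haeq, e0]

/-- a grading-preserving ring endomorphism of `Λ` fixing `e₁` and `e₂` and
sending every Schur element to a non-negative integer combination of Schur elements is the
identity. -/
theorem grading_preserving_schur_positive_endomorphism_eq_id
    (f : Lam →+* Lam)
    (hgrade : ∀ (N : ℕ) (p : Lam),
      MvPolynomial.IsWeightedHomogeneous (fun i : ℕ => i + 1) p N →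
      MvPolynomial.IsWeightedHomogeneous (fun i : ℕ => i + 1) (f p) N)
    (he1 : f (eElt 1) = eElt 1)
    (he2 : f (eElt 2) = eElt 2)
    (hpos : ∀ (n : ℕ) (μ : Nat.Partition n),
      ∃ (S : Finset (Σ m : ℕ, Nat.Partition m)) (c : (Σ m : ℕ, Nat.Partition m) → ℕ),
        f (schur μ) = ∑ x ∈ S, (c x : ℤ) • schur x.2) :
    f = RingHom.id Lam := by
  have h3 := map_eElt_three f hpos he1 he2
  have key : ∀ k : ℕ, f (eElt ((k : ℤ) + 1)) = eElt ((k : ℤ) + 1) := by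
    intro k
    induction k using Nat.strong_induction_on with
    | _ k ih =>
      match k, ih with
      | 0, _ => simpa using he1
      | 1, _ => simpa using he2
      | 2, _ => simpa using h3
      | m + 3, ih =>
        have i1 := ih m (by omega)
        have i2 := ih (m + 1) (by omega)
        have i3 := ih (m + 2) (by omega)
        push_cast at i2 i3 ⊢
        simp only [add_assoc] at i2 i3 ⊢
        norm_num at i2 i3 ⊢
        exact map_eElt_of_four_le f hpos m he1 he2 h3 i1 i2 i3
  refine MvPolynomial.ringHom_ext (fun z => by simp) fun k => ?_
  rw [← eElt_of_pos, key, RingHom.id_apply]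

end
end
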